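/- arXiv:1309.6506 — 3 statements merged into one kernel-verified Lean document; each statement's English description precedes it below -/
import Mathlib

section
/- Let n, k, r, q be integers with r ≥ 2, q ≥ −r+1 and n ≥ k ≥ 2q+2r+2, and let C' = (q+r)^{1/⌊k/(q+r+1)⌋} (a real number). Then every H^{(r)}(k,q)-free r-uniform hypergraph on n vertices has fewer than (2C'/r!)·n^{r−1+1/⌊k/(q+r+1)⌋} + (2(q+r)/r!)·n^{r−1} edges; that is, ex(n, H^{(r)}(k,q)) < (2C'/r!)·n^{r−1+1/⌊k/(q+r+1)⌋} + (2(q+r)/r!)·n^{r−1}. -/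
/-- An edge set `E` (of an `r`-uniform hypergraph) is `H^{(r)}(k,q)`-free if for every
integer `i` with `q + r + 1 ≤ i ≤ k`, every `i` pairwise distinct edges together cover
at least `i - q` vertices. -/
def HFree {V : Type*} [DecidableEq V] (r k : ℕ) (q : ℤ) (E : Finset (Finset V)) : Prop :=
  ∀ i : ℕ, q + r + 1 ≤ (i : ℤ) → i ≤ k → ∀ E' ⊆ E, E'.card = i →
    (i : ℤ) - q ≤ ((E'.biUnion id).card : ℤ)

/-!
The link of an `(r - 2)`-set in an `H^{(r)}(k,q)`-free hypergraph is a graph in which a tree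
together with `s = q + r` further edges on its vertices always has more than `k` edges. Suppose such
a graph on `n` vertices has at least `(D + s) n` edges, where `D ^ h = s n` and `h (s + 1) ≤ k`. It
has a subgraph of minimum degree `D + s`, in which we search breadth first from a vertex `v`. If a
vertex `x` at distance `j < h - 1` had more than `s` neighbours that are not private children of
`x`, then the shortest paths from `v` to `x` and to these neighbours would span a small tree with
`s` extra edges. So the spheres around `v` grow by a factor `D` up to radius `h - 1`. By the same
argument a vertex of the `h`-th sphere has at most `s` neighbours in the previous one, and the
`h`-th sphere has at least `D ^ h / s = n` vertices, although it misses `v`. Averaging the resulting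
bound over all links gives the theorem.
-/

open Finset

variable {V : Type*}

/-- The graph case of the freeness condition: `IsSparse G s k` says that the edge set of `G` is
`H^{(2)}(k, s - 2)`-free. The covered vertices are replaced by any `W` containing them. -/
def IsSparse (G : SimpleGraph V) (s k : ℕ) : Prop :=
  ∀ (F : Finset (Sym2 V)) (W : Finset V), (F : Set (Sym2 V)) ⊆ G.edgeSet → F ⊆ W.sym2 →
    s < #F → #F ≤ k → #F + 2 ≤ #W + s

lemma IsSparse.mono {G H : SimpleGraph V} {s k : ℕ} (hHG : H ≤ G) (hG : IsSparse G s k) :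
    IsSparse H s k :=
  fun F W hF ↦ hG F W (hF.trans (SimpleGraph.edgeSet_mono hHG))

section BreadthFirst

variable {G : SimpleGraph V} {v : V} {p : V → V} {s k : ℕ}

lemma exists_adj_dist_add_one_eq {x : V} (hx : G.Reachable v x) (hxv : x ≠ v) :
    ∃ y, G.Adj x y ∧ G.dist v y + 1 = G.dist v x := by
  obtain ⟨w, hw⟩ := hx.symm.exists_walk_length_eq_dist
  cases w with
  | nil => exact absurd rfl hxv
  | @cons _ y _ hxy w =>
    refine ⟨y, hxy, ?_⟩
    have hle : G.dist y v ≤ w.length := G.dist_le w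
    have hstep := hxy.diff_dist_adj (u := v)
    rw [SimpleGraph.Walk.length_cons, SimpleGraph.dist_comm] at hw
    rw [SimpleGraph.dist_comm] at hle
    omega

/-- The parent functions of the breadth-first search trees of `G` rooted at `v`. Nothing is asked
at `v` and outside the connected component of `v`. -/
def IsBFSParent (G : SimpleGraph V) (v : V) (p : V → V) : Prop :=
  ∀ x, G.Reachable v x → x ≠ v → G.Adj x (p x) ∧ G.dist v (p x) + 1 = G.dist v x

/-- `y` is one step further from `v` than its neighbour `x`, and in every breadth-first search tree
rooted at `v` it is a child of `x`. -/
def IsPrivateChild (G : SimpleGraph V) (v x y : V) : Prop :=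
  G.Adj x y ∧ G.dist v y = G.dist v x + 1 ∧ ∀ z, G.Adj z y → G.dist v z = G.dist v x → z = x

/-- A set of non-root vertices which together with the root `v` spans a subtree of the breadth-first
search tree `p`. The root is left out so that `#T` is the number of edges of that subtree. -/
def IsParentClosed (G : SimpleGraph V) (v : V) (p : V → V) (T : Finset V) : Prop :=
  ∀ w ∈ T, G.Reachable v w ∧ w ≠ v ∧ (p w = v ∨ p w ∈ T)

lemma exists_isBFSParent_forall_isPrivateChild (G : SimpleGraph V) (v x : V) :
    ∃ p, IsBFSParent G v p ∧
      ∀ y, G.Reachable v y → y ≠ v → p y = x → IsPrivateChild G v x y := by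
  have exists_parent : ∀ y, G.Reachable v y → y ≠ v → ∃ z,
      (G.Adj y z ∧ G.dist v z + 1 = G.dist v y) ∧ (z = x → IsPrivateChild G v x y) := by
    intro y hy hyv
    by_cases hother : ∃ z, (G.Adj y z ∧ G.dist v z + 1 = G.dist v y) ∧ z ≠ x
    · obtain ⟨z, hz, hzx⟩ := hother
      exact ⟨z, hz, fun h ↦ absurd h hzx⟩
    · push Not at hother
      obtain ⟨z, hyz, hz⟩ := exists_adj_dist_add_one_eq hy hyv
      obtain rfl := hother z ⟨hyz, hz⟩
      exact ⟨z, ⟨hyz, hz⟩, fun _ ↦ ⟨hyz.symm, hz.symm,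
        fun u huy hu ↦ hother u ⟨huy.symm, by omega⟩⟩⟩
  have : Nonempty V := ⟨v⟩
  choose! p hp hpx using exists_parent
  exact ⟨p, hp, hpx⟩

lemma IsBFSParent.injOn_edge (hp : IsBFSParent G v p) :
    Set.InjOn (fun w ↦ s(w, p w)) {w | G.Reachable v w ∧ w ≠ v} := by
  rintro a ⟨ha, hav⟩ b ⟨hb, hbv⟩ hab
  have ha' := (hp a ha hav).2
  have hb' := (hp b hb hbv).2
  rcases Sym2.eq_iff.1 hab with ⟨h, -⟩ | ⟨hab, hba⟩
  · exact h
  · rw [hba] at ha'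
    rw [← hab] at hb'
    omega

lemma IsBFSParent.exists_isParentClosed_mem [DecidableEq V] (hp : IsBFSParent G v p) {x : V}
    (hx : G.Reachable v x) :
    ∃ T, IsParentClosed G v p T ∧ x ∈ insert v T ∧ #T ≤ G.dist v x := by
  induction hd : G.dist v x generalizing x with
  | zero =>
    obtain rfl := hx.dist_eq_zero_iff.1 hd
    exact ⟨∅, by simp [IsParentClosed], by simp, by simp⟩
  | succ d ih =>
    have hxv : x ≠ v := by
      rintro rfl
      simp at hd
    obtain ⟨hadj, hdist⟩ := hp x hx hxv
    obtain ⟨T, hT, hpT, hcard⟩ := ih (hx.trans hadj.reachable) (by omega)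
    refine ⟨insert x T, ?_, by simp, (card_insert_le _ _).trans (by omega)⟩
    intro w hw
    rcases mem_insert.1 hw with rfl | hw
    · exact ⟨hx, hxv, by grind⟩
    · obtain ⟨hw, hwv, hpw⟩ := hT w hw
      exact ⟨hw, hwv, hpw.imp_right mem_insert_of_mem⟩

lemma IsBFSParent.exists_isParentClosed_superset [DecidableEq V] (hp : IsBFSParent G v p)
    {A : Finset V} (hA : ∀ y ∈ A, G.Reachable v y) :
    ∃ T, IsParentClosed G v p T ∧ A ⊆ insert v T ∧ #T ≤ ∑ y ∈ A, G.dist v y := by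
  have branch : ∀ y ∈ A, ∃ T, IsParentClosed G v p T ∧ y ∈ insert v T ∧ #T ≤ G.dist v y :=
    fun y hy ↦ hp.exists_isParentClosed_mem (hA y hy)
  choose! T hT hmem hcard using branch
  refine ⟨A.biUnion T, ?_, ?_, card_biUnion_le.trans (sum_le_sum hcard)⟩
  · intro w hw
    obtain ⟨y, hy, hwy⟩ := mem_biUnion.1 hw
    obtain ⟨hw, hwv, hpw⟩ := hT y hy w hwy
    exact ⟨hw, hwv, hpw.imp_right fun h ↦ subset_biUnion_of_mem T hy h⟩
  · intro y hy
    exact insert_subset_insert _ (subset_biUnion_of_mem T hy) (hmem y hy)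

lemma IsSparse.lt_card_add_card [DecidableEq V] (hG : IsSparse G s k) (hs : 0 < s)
    (hp : IsBFSParent G v p) {T : Finset V} (hT : IsParentClosed G v p T) {N : Finset (Sym2 V)}
    (hNG : (N : Set (Sym2 V)) ⊆ G.edgeSet) (hNT : N ⊆ (insert v T).sym2)
    (hN : ∀ w ∈ T, s(w, p w) ∉ N) (hcard : s ≤ #N) : k < #T + #N := by
  set tree : Finset (Sym2 V) := T.image fun w ↦ s(w, p w) with htree
  have nonroot : (T : Set V) ⊆ {w | G.Reachable v w ∧ w ≠ v} :=
    fun w hw ↦ ⟨(hT w hw).1, (hT w hw).2.1⟩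
  have card_tree : #tree = #T := card_image_of_injOn (hp.injOn_edge.mono nonroot)
  have disjoint_tree : Disjoint tree N := by
    simpa [htree, disjoint_left] using hN
  have card_union : #(tree ∪ N) = #T + #N := by
    rw [card_union_of_disjoint disjoint_tree, card_tree]
  have tree_subset : (tree : Set (Sym2 V)) ⊆ G.edgeSet := by
    intro e he
    obtain ⟨w, hw, rfl⟩ := mem_image.1 he
    exact (hp w (hT w hw).1 (hT w hw).2.1).1
  have tree_subset_sym2 : tree ⊆ (insert v T).sym2 := by
    intro e he
    obtain ⟨w, hw, rfl⟩ := mem_image.1 he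
    exact mk_mem_sym2_iff.2 ⟨mem_insert_of_mem hw, mem_insert.2 (hT w hw).2.2⟩
  have card_pos : 0 < #T := by
    rw [Finset.card_pos]
    by_contra hempty
    obtain ⟨e, he⟩ : N.Nonempty := Finset.card_pos.1 (hs.trans_le hcard)
    obtain rfl : e = s(v, v) := by
      simpa [not_nonempty_iff_eq_empty.1 hempty, Sym2.diag] using hNT he
    exact G.irrefl (hNG he)
  by_contra! hk
  have hsparse := hG (tree ∪ N) (insert v T) (by simp [tree_subset, hNG])
    (union_subset tree_subset_sym2 hNT) (by omega) (by omega)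
  have := card_insert_le v T
  omega

lemma IsSparse.card_le_of_forall_not_isPrivateChild (hG : IsSparse G s k) (hs : 0 < s) {x : V}
    (hx : G.Reachable v x) {A : Finset V} {m : ℕ}
    (hA : ∀ y ∈ A, G.Adj x y ∧ ¬ IsPrivateChild G v x y ∧ G.dist v y ≤ m)
    (hk : G.dist v x + s * m + s ≤ k) : #A ≤ s := by
  classical
  obtain ⟨p, hp, hpx⟩ := exists_isBFSParent_forall_isPrivateChild G v x
  by_contra! hlt
  obtain ⟨B, hBA, hB⟩ := exists_subset_card_eq
    ((Nat.le_sub_one_of_lt hlt).trans (pred_card_le_card_erase (a := p x)))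
  have hB_mem : ∀ y ∈ B, y ≠ p x ∧ y ∈ A := fun y hy ↦ mem_erase.1 (hBA hy)
  have hx_notMem : x ∉ B := fun h ↦ G.irrefl (hA x (hB_mem x h).2).1
  obtain ⟨T, hT, hsub, hTcard⟩ := hp.exists_isParentClosed_superset (A := insert x B) (by
    simp only [mem_insert, forall_eq_or_imp]
    exact ⟨hx, fun y hy ↦ hx.trans (hA y (hB_mem y hy).2).1.reachable⟩)
  have hTcard' : #T ≤ G.dist v x + s * m := by
    rw [sum_insert hx_notMem] at hTcard
    have : ∑ y ∈ B, G.dist v y ≤ #B • m :=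
      sum_le_card_nsmul _ _ _ fun y hy ↦ (hA y (hB_mem y hy).2).2.2
    rw [hB, smul_eq_mul] at this
    omega
  have hN : #(B.image fun y ↦ s(x, y)) = s := by
    rw [card_image_of_injective _ fun _ _ ↦ Sym2.congr_right.1, hB]
  have := hG.lt_card_add_card hs hp hT (N := B.image fun y ↦ s(x, y)) ?_ ?_ ?_ hN.ge
  · omega
  · simp only [coe_image, Set.image_subset_iff]
    exact fun y hy ↦ (hA y (hB_mem y hy).2).1
  · simp only [image_subset_iff, mk_mem_sym2_iff]
    exact fun y hy ↦ ⟨hsub (mem_insert_self x B), hsub (mem_insert_of_mem hy)⟩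
  · intro w hw hwN
    obtain ⟨y, hy, hxy⟩ := mem_image.1 hwN
    rcases Sym2.eq_iff.1 hxy with ⟨rfl, rfl⟩ | ⟨hxw, rfl⟩
    · exact (hB_mem _ hy).1 rfl
    · exact (hA y (hB_mem y hy).2).2.1 (hpx y (hT y hw).1 (hT y hw).2.1 hxw.symm)

end BreadthFirst

section Spheres

variable [Fintype V] {G : SimpleGraph V} {v : V} {s k : ℕ} {D : ℝ}

open scoped Classical in
/-- The vertices at distance exactly `j` from `v`. Reachability is required because `G.dist v x` is
`0` when `x` is not reachable from `v`. -/
noncomputable def distSphere (G : SimpleGraph V) (v : V) (j : ℕ) : Finset V :=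
  {x | G.Reachable v x ∧ G.dist v x = j}

lemma mem_distSphere {j : ℕ} {x : V} :
    x ∈ distSphere G v j ↔ G.Reachable v x ∧ G.dist v x = j := by
  simp [distSphere]

lemma le_card_filter_of_card_filter_not_le {α : Type*} {A : Finset α} {P : α → Prop}
    [DecidablePred P] (hA : D + s ≤ #A) (hP : #{a ∈ A | ¬ P a} ≤ s) : D ≤ #{a ∈ A | P a} := by
  rw [← card_filter_add_card_filter_not P] at hA
  push_cast at hA
  have : (#{a ∈ A | ¬ P a} : ℝ) ≤ s := mod_cast hP
  linarith

variable [DecidableRel G.Adj]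

lemma IsSparse.mul_card_distSphere_le_card_distSphere_succ (hG : IsSparse G s k) (hs : 0 < s)
    (hdeg : ∀ x, G.Reachable v x → D + s ≤ G.degree x) {j : ℕ} (hk : j + s * (j + 1) + s ≤ k) :
    D * #(distSphere G v j) ≤ #(distSphere G v (j + 1)) := by
  classical
  suffices #(distSphere G v j) • D ≤ #(distSphere G v (j + 1)) • (1 : ℝ) by
    simpa [mul_comm] using this
  refine card_nsmul_le_card_nsmul (IsPrivateChild G v) (fun x hx ↦ ?_) fun y _ ↦ ?_
  · obtain ⟨hvx, rfl⟩ := mem_distSphere.1 hx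
    have few_not_private : #{y ∈ G.neighborFinset x | ¬ IsPrivateChild G v x y} ≤ s := by
      refine hG.card_le_of_forall_not_isPrivateChild hs hvx (fun y hy ↦ ?_) hk
      obtain ⟨hxy, hy⟩ := mem_filter.1 hy
      rw [SimpleGraph.mem_neighborFinset] at hxy
      have := hxy.diff_dist_adj (u := v)
      exact ⟨hxy, hy, by omega⟩
    refine (le_card_filter_of_card_filter_not_le (hdeg x hvx) few_not_private).trans ?_
    gcongr
    intro y hy
    obtain ⟨-, hpriv⟩ := mem_filter.1 hy
    exact mem_filter.2 ⟨mem_distSphere.2 ⟨hvx.trans hpriv.1.reachable, hpriv.2.1⟩, hpriv⟩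
  · norm_cast
    refine card_le_one.2 fun a ha b hb ↦ ?_
    obtain ⟨ha, hay⟩ := mem_filter.1 ha
    obtain ⟨hb, hby⟩ := mem_filter.1 hb
    exact hby.2.2 a hay.1 ((mem_distSphere.1 ha).2.trans (mem_distSphere.1 hb).2.symm)

lemma IsSparse.pow_le_card_distSphere (hG : IsSparse G s k) (hs : 0 < s) (hD : 0 ≤ D)
    (hdeg : ∀ x, G.Reachable v x → D + s ≤ G.degree x) {j : ℕ} (hk : (j + 1) * (s + 1) ≤ k) :
    D ^ j ≤ #(distSphere G v j) := by
  induction j with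
  | zero =>
    have : 0 < #(distSphere G v 0) := card_pos.2 ⟨v, by simp [mem_distSphere]⟩
    simpa using this
  | succ j ih =>
    calc D ^ (j + 1) = D * D ^ j := pow_succ' D j
      _ ≤ D * #(distSphere G v j) := by
        gcongr
        exact ih (by linarith)
      _ ≤ #(distSphere G v (j + 1)) :=
        hG.mul_card_distSphere_le_card_distSphere_succ hs hdeg (by linarith)

lemma IsSparse.mul_card_distSphere_le_mul_card_distSphere_succ (hG : IsSparse G s k) (hs : 0 < s)
    (hdeg : ∀ x, G.Reachable v x → D + s ≤ G.degree x) {j : ℕ} (hk : (j + 1) * (s + 1) ≤ k) :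
    D * #(distSphere G v j) ≤ s * #(distSphere G v (j + 1)) := by
  classical
  suffices #(distSphere G v j) • D ≤ #(distSphere G v (j + 1)) • (s : ℝ) by
    simpa [mul_comm] using this
  refine card_nsmul_le_card_nsmul G.Adj (fun x hx ↦ ?_) fun y hy ↦ ?_
  · obtain ⟨hvx, hx⟩ := mem_distSphere.1 hx
    have few_not_below : #{y ∈ G.neighborFinset x | ¬ G.dist v y = j + 1} ≤ s := by
      refine hG.card_le_of_forall_not_isPrivateChild (m := j) hs hvx (fun y hy ↦ ?_) (by linarith)
      obtain ⟨hxy, hy⟩ := mem_filter.1 hy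
      rw [SimpleGraph.mem_neighborFinset] at hxy
      have := hxy.diff_dist_adj (u := v)
      exact ⟨hxy, fun h ↦ hy (hx ▸ h.2.1), by omega⟩
    refine (le_card_filter_of_card_filter_not_le (hdeg x hvx) few_not_below).trans ?_
    gcongr
    intro y hy
    obtain ⟨hxy, hy⟩ := mem_filter.1 hy
    rw [SimpleGraph.mem_neighborFinset] at hxy
    exact mem_filter.2 ⟨mem_distSphere.2 ⟨hvx.trans hxy.reachable, hy⟩, hxy⟩
  · obtain ⟨hvy, hy⟩ := mem_distSphere.1 hy
    norm_cast
    refine hG.card_le_of_forall_not_isPrivateChild (m := j) hs hvy (fun x hx ↦ ?_) (by linarith)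
    obtain ⟨hx, hxy⟩ := mem_filter.1 hx
    have hxj := (mem_distSphere.1 hx).2
    exact ⟨hxy.symm, fun h ↦ by have := h.2.1; omega, hxj.le⟩

lemma IsSparse.pow_lt_mul_card (hG : IsSparse G s k) (hs : 0 < s) (hD : 0 ≤ D)
    (hdeg : ∀ x, G.Reachable v x → D + s ≤ G.degree x) {h : ℕ} (hh : h ≠ 0)
    (hk : h * (s + 1) ≤ k) : D ^ h < s * Fintype.card V := by
  obtain ⟨j, rfl⟩ := Nat.exists_eq_succ_of_ne_zero hh
  have card_lt : #(distSphere G v (j + 1)) < Fintype.card V :=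
    card_lt_univ_of_notMem (x := v) (by simp [mem_distSphere])
  calc D ^ (j + 1) = D * D ^ j := pow_succ' D j
    _ ≤ D * #(distSphere G v j) := by
      gcongr
      exact hG.pow_le_card_distSphere hs hD hdeg hk
    _ ≤ s * #(distSphere G v (j + 1)) :=
      hG.mul_card_distSphere_le_mul_card_distSphere_succ hs hdeg hk
    _ < s * Fintype.card V := by gcongr

end Spheres

section EdgeBound

variable [Fintype V]

open scoped Classical in
lemma exists_le_forall_mem_support_le_degree {G : SimpleGraph V} {t : ℝ} (ht : 0 ≤ t)
    (hG : G ≠ ⊥) (hGt : t * G.support.ncard ≤ G.edgeSet.ncard) :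
    ∃ H ≤ G, H ≠ ⊥ ∧ ∀ x ∈ H.support, t ≤ H.degree x := by
  obtain ⟨H, hHG, ⟨hH, hHt⟩, hmin⟩ := exists_minimal_le_of_wellFoundedLT
    (fun H : SimpleGraph V ↦ H ≠ ⊥ ∧ t * H.support.ncard ≤ H.edgeSet.ncard) G ⟨hG, hGt⟩
  refine ⟨H, hHG, hH, fun x hx ↦ ?_⟩
  by_contra! hlt
  set H' := H.deleteIncidenceSet x with hH'
  have edges : H.edgeSet.ncard ≤ H'.edgeSet.ncard + H.degree x := by
    have := H.card_edgeFinset_deleteIncidenceSet x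
    simp only [← Set.ncard_coe_finset, SimpleGraph.coe_edgeFinset, ← hH'] at this
    omega
  have support : H'.support.ncard + 1 ≤ H.support.ncard := by
    rw [← Set.ncard_sdiff_singleton_add_one hx]
    gcongr
    · exact Set.toFinite _
    · exact H.support_deleteIncidenceSet_subset x
  have edges_gt : t * H'.support.ncard < H'.edgeSet.ncard := by
    have : t * (H'.support.ncard + 1) ≤ t * H.support.ncard := by
      gcongr
      exact_mod_cast support
    have : (H.edgeSet.ncard : ℝ) ≤ H'.edgeSet.ncard + H.degree x := mod_cast edges
    linarith
  have H'_ne_bot : H' ≠ ⊥ := by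
    intro hbot
    simp [hbot] at edges_gt
  have hle : H ≤ H' := hmin ⟨H'_ne_bot, edges_gt.le⟩ (H.deleteIncidenceSet_le x)
  obtain ⟨y, hxy⟩ := hx
  exact (SimpleGraph.deleteIncidenceSet_adj.1 (hle hxy)).2.1 rfl

lemma IsSparse.ncard_edgeSet_lt [Nonempty V] {G : SimpleGraph V} {s k h : ℕ}
    (hG : IsSparse G s k) (hs : 0 < s) (hh : h ≠ 0) (hk : h * (s + 1) ≤ k) :
    (G.edgeSet.ncard : ℝ) <
      ((s * Fintype.card V : ℝ) ^ (1 / h : ℝ) + s) * Fintype.card V := by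
  classical
  by_contra! hge
  set D : ℝ := (s * Fintype.card V : ℝ) ^ (1 / h : ℝ) with hD
  have hD0 : 0 ≤ D := by positivity
  have hG_ne_bot : G ≠ ⊥ := by
    rintro rfl
    have : 0 < (D + s) * Fintype.card V := by positivity
    simp at hge
    linarith
  have support_le : (D + s) * G.support.ncard ≤ G.edgeSet.ncard := by
    refine le_trans ?_ hge
    gcongr
    exact Nat.card_eq_fintype_card (α := V) ▸ Set.ncard_le_card _
  obtain ⟨H, hHG, hH, hdeg⟩ :=
    exists_le_forall_mem_support_le_degree (by positivity) hG_ne_bot support_le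
  obtain ⟨v, hv⟩ := Set.nonempty_iff_ne_empty.2 (mt H.support_eq_bot_iff.1 hH)
  have hdeg_v : ∀ x, H.Reachable v x → D + s ≤ H.degree x := by
    intro x hx
    obtain rfl | hxv := eq_or_ne x v
    · exact hdeg x hv
    · exact hdeg x (SimpleGraph.mem_support_of_reachable hxv hx.symm)
  have hlt := (hG.mono hHG).pow_lt_mul_card hs hD0 hdeg_v hh hk
  rw [hD, one_div, Real.rpow_inv_natCast_pow (by positivity) hh] at hlt
  exact lt_irrefl _ hlt

end EdgeBound

section Link

variable [DecidableEq V] {E : Finset (Finset V)} {S : Finset V}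

/-- The pairs that complete `S` to an edge of the hypergraph `E`, as a graph. -/
def linkGraph (E : Finset (Finset V)) (S : Finset V) : SimpleGraph V :=
  SimpleGraph.fromEdgeSet {e | Disjoint S e.toFinset ∧ S ∪ e.toFinset ∈ E}

lemma mem_edgeSet_linkGraph {e : Sym2 V} :
    e ∈ (linkGraph E S).edgeSet ↔
      (Disjoint S e.toFinset ∧ S ∪ e.toFinset ∈ E) ∧ ¬ e.IsDiag := by
  simp [linkGraph]

lemma injOn_union_toFinset_linkGraph :
    Set.InjOn (fun e : Sym2 V ↦ S ∪ e.toFinset) (linkGraph E S).edgeSet := by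
  intro a ha b hb hab
  have hsdiff : (S ∪ a.toFinset) \ S = (S ∪ b.toFinset) \ S := congrArg (· \ S) hab
  rw [union_sdiff_cancel_left (mem_edgeSet_linkGraph.1 ha).1.1,
    union_sdiff_cancel_left (mem_edgeSet_linkGraph.1 hb).1.1] at hsdiff
  exact Sym2.ext fun x ↦ by rw [← Sym2.mem_toFinset, hsdiff, Sym2.mem_toFinset]

lemma HFree.isSparse_linkGraph {r k s : ℕ} {q : ℤ} (hE : HFree r k q E) (hS : #S + 2 = r)
    (hs : (s : ℤ) = q + r) : IsSparse (linkGraph E S) s k := by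
  intro F W hF hFW hsF hFk
  set E' := F.image fun e ↦ S ∪ e.toFinset with hE'
  have card_E' : #E' = #F := card_image_of_injOn (injOn_union_toFinset_linkGraph.mono hF)
  have E'_subset : E' ⊆ E := image_subset_iff.2 fun e he ↦ (mem_edgeSet_linkGraph.1 (hF he)).1.2
  have cover_subset : E'.biUnion id ⊆ S ∪ W := by
    simp only [hE', biUnion_subset_iff_forall_subset, forall_mem_image, id]
    exact fun e he ↦ union_subset_union_right fun x hx ↦
      mem_sym2_iff.1 (hFW he) x (Sym2.mem_toFinset.1 hx)
  have cover_le := (card_le_card cover_subset).trans (card_union_le S W)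
  have le_cover := hE #F (by omega) hFk E' E'_subset card_E'
  omega

lemma card_filter_subset_le_ncard_edgeSet_linkGraph (hE : ∀ e ∈ E, #e = #S + 2) :
    #{e ∈ E | S ⊆ e} ≤ (linkGraph E S).edgeSet.ncard := by
  have finite : (linkGraph E S).edgeSet.Finite :=
    Set.Finite.of_injOn (t := (E : Set (Finset V)))
      (fun e he ↦ (mem_edgeSet_linkGraph.1 he).1.2) injOn_union_toFinset_linkGraph E.finite_toSet
  rw [← Set.ncard_coe_finset]
  refine (Set.ncard_le_ncard (t := (fun e : Sym2 V ↦ S ∪ e.toFinset) '' (linkGraph E S).edgeSet)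
    ?_ (finite.image _)).trans (Set.ncard_image_le finite)
  intro e he
  obtain ⟨he, hSe⟩ := mem_filter.1 he
  obtain ⟨a, b, hab, hsdiff⟩ : ∃ a b, a ≠ b ∧ e \ S = {a, b} := by
    rw [← card_eq_two, card_sdiff_of_subset hSe, hE e he, Nat.add_sub_cancel_left]
  have hunion : S ∪ s(a, b).toFinset = e := by
    rw [Sym2.toFinset_mk_eq, ← hsdiff, union_sdiff_of_subset hSe]
  refine ⟨s(a, b), mem_edgeSet_linkGraph.2 ⟨⟨?_, hunion ▸ he⟩, hab⟩, hunion⟩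
  rw [Sym2.toFinset_mk_eq, ← hsdiff]
  exact disjoint_sdiff

end Link

section Averaging

variable [Fintype V] [DecidableEq V] {E : Finset (Finset V)} {m j : ℕ}

lemma sum_card_filter_subset (hE : ∀ e ∈ E, #e = m + j) :
    ∑ S ∈ powersetCard m univ, #{e ∈ E | S ⊆ e} = #E * (m + j).choose m := by
  refine (sum_card_bipartiteAbove_eq_sum_card_bipartiteBelow fun S e : Finset V ↦ S ⊆ e).trans ?_
  rw [← smul_eq_mul, ← sum_const]
  refine sum_congr rfl fun e he ↦ ?_
  rw [← hE e he, ← card_powersetCard]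
  congr 1
  ext S
  simp [bipartiteBelow, mem_powersetCard, and_comm]

lemma factorial_mul_card_lt [Nonempty V] {X : ℝ} (hE : ∀ e ∈ E, #e = m + j) (hX : 0 < X)
    (hlink : ∀ S, #S = m → #{e ∈ E | S ⊆ e} < X) :
    (m + j).factorial * #E < j.factorial * (Fintype.card V ^ m * X) := by
  have hsum : m.factorial * (#E * (m + j).choose m : ℝ) < Fintype.card V ^ m * X := by
    rw_mod_cast [← sum_card_filter_subset hE]
    push_cast
    rcases (powersetCard m (univ : Finset V)).eq_empty_or_nonempty with hempty | hne
    · rw [hempty, sum_empty, mul_zero]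
      positivity
    · calc
        _ < (m.factorial : ℝ) * ∑ _S ∈ powersetCard m (univ : Finset V), X := by
          gcongr with S hS
          exact hlink S (mem_powersetCard.1 hS).2
        _ = (Fintype.card V).descFactorial m * X := by
          rw [sum_const, card_powersetCard, card_univ, nsmul_eq_mul,
            Nat.descFactorial_eq_factorial_mul_choose]
          push_cast
          ring
        _ ≤ Fintype.card V ^ m * X := by
          gcongr
          exact_mod_cast Nat.descFactorial_le_pow _ m
  calc ((m + j).factorial * #E : ℝ)
      = j.factorial * (m.factorial * (#E * (m + j).choose m)) := by
        rw [← Nat.add_choose_mul_factorial_mul_factorial, ← Nat.choose_symm_add]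
        push_cast
        ring
    _ < _ := by gcongr

end Averaging

lemma two_mul_rpow_div_mul_rpow_add_eq {s x : ℝ} (hs : 0 ≤ s) (hx : 0 < x) (a c : ℝ) (m : ℕ) :
    2 * s ^ a / c * x ^ ((m + 2 : ℕ) - 1 + a : ℝ) + 2 * s / c * x ^ ((m + 2 : ℕ) - 1 : ℝ) =
      2 * (x ^ m * (((s * x) ^ a + s) * x)) / c := by
  have hexp : ((m + 2 : ℕ) - 1 : ℝ) = (m + 1 : ℕ) := by
    push_cast
    ring
  rw [hexp, Real.rpow_add hx, Real.rpow_natCast, Real.mul_rpow hs hx.le]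
  ring

theorem statement2_general {V : Type*} [Fintype V] [Nonempty V] [DecidableEq V]
    (k r : ℕ) (q h : ℤ) (C' : ℝ) (hr : 2 ≤ r) (hq : -(r : ℤ) + 1 ≤ q) (hk : q + r + 1 ≤ (k : ℤ))
    (hh : h = (k : ℤ) / (q + r + 1))
    (hC : C' = ((q : ℝ) + (r : ℝ)) ^ ((1 : ℝ) / (h : ℝ)))
    (E : Finset (Finset V)) (hunif : ∀ e ∈ E, #e = r) (hfree : HFree r k q E) :
    (#E : ℝ) <
      (2 * C' / (r.factorial : ℝ)) * (Fintype.card V : ℝ) ^ ((r : ℝ) - 1 + 1 / (h : ℝ)) +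
        (2 * ((q : ℝ) + (r : ℝ)) / (r.factorial : ℝ)) *
          (Fintype.card V : ℝ) ^ ((r : ℝ) - 1) := by
  obtain ⟨s, hs⟩ : ∃ s : ℕ, (s : ℤ) = q + r := ⟨(q + r).toNat, by omega⟩
  have hs_real : (q : ℝ) + r = s := by exact_mod_cast hs.symm
  obtain ⟨m, rfl⟩ := Nat.exists_eq_add_of_le' hr
  obtain rfl : h = (k / (s + 1) : ℕ) := by simp [hh, hs]
  have hh_ne : k / (s + 1) ≠ 0 := (Nat.div_pos (by omega) s.succ_pos).ne'
  have card_link_lt : ∀ S : Finset V, #S = m → (#{e ∈ E | S ⊆ e} : ℝ) <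
      ((s * Fintype.card V : ℝ) ^ (1 / (k / (s + 1) : ℕ) : ℝ) + s) * Fintype.card V := by
    intro S hS
    refine lt_of_le_of_lt ?_ ((hfree.isSparse_linkGraph (by rw [hS]) hs).ncard_edgeSet_lt
      (by omega) hh_ne (Nat.div_mul_le_self k (s + 1)))
    exact_mod_cast card_filter_subset_le_ncard_edgeSet_linkGraph (by rwa [hS])
  rw [hC, hs_real, Int.cast_natCast,
    two_mul_rpow_div_mul_rpow_add_eq s.cast_nonneg (by positivity), lt_div_iff₀' (by positivity)]
  exact_mod_cast factorial_mul_card_lt hunif (by positivity [show 0 < s by omega]) card_link_lt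

/-- For `r ≥ 2`, `q ≥ -r+1`, `n ≥ k ≥ 2q+2r+2`, `h = ⌊k/(q+r+1)⌋` and
`C' = (q+r)^{1/h}`, every `H^{(r)}(k,q)`-free `r`-uniform hypergraph on `n` vertices has
fewer than `(2C'/r!)·n^{r-1+1/h} + (2(q+r)/r!)·n^{r-1}` edges. -/
theorem statement2 (n k r : ℕ) (q h : ℤ) (C' : ℝ)
    (hr : 2 ≤ r) (hq : -(r : ℤ) + 1 ≤ q)
    (hk : 2 * q + 2 * r + 2 ≤ (k : ℤ)) (hn : k ≤ n)
    (hh : h = (k : ℤ) / (q + r + 1))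
    (hC : C' = ((q : ℝ) + (r : ℝ)) ^ ((1 : ℝ) / (h : ℝ)))
    (E : Finset (Finset (Fin n))) (hunif : ∀ e ∈ E, e.card = r)
    (hfree : HFree r k q E) :
    (E.card : ℝ) <
      (2 * C' / (r.factorial : ℝ)) * (n : ℝ) ^ ((r : ℝ) - 1 + 1 / (h : ℝ)) +
        (2 * ((q : ℝ) + (r : ℝ)) / (r.factorial : ℝ)) * (n : ℝ) ^ ((r : ℝ) - 1) := by
  have : Nonempty (Fin n) := ⟨⟨0, by omega⟩⟩
  simpa using statement2_general k r q h C' hr hq (by omega) hh hC E hunif hfree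
end

section
/- Let n, k, r be integers with r ≥ 2 and n ≥ k ≥ 2r+2, and let C'' = r^{1/⌊k/(r+1)⌋} (a real number). Then m(n,r,k) < (2C''/r!)·n^{r−1+1/⌊k/(r+1)⌋} + (2/(r−1)!)·n^{r−1}. -/
/-!
Fix a set `T` of `r - 2` vertices. The edges containing `T` form, after deleting `T`, a multigraph
in which any `i ≤ k` edges span at least `i - (r - 2)` vertices. If this multigraph had average
degree at least `2 (D + r)`, where `D ^ q = r n` and `q = ⌊k / (r + 1)⌋`, it would contain a
sub-multigraph of minimum degree at least `D + r`. Grow a breadth-first tree in it. The edges off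
the tree joining a fixed vertex `u` to low levels, taken together with the tree paths from their
ends to the root, form a family of at most `k` edges that spans at most one vertex more than it has
tree edges, so there are at most `r - 1` of them. Hence the levels up to `q - 1` grow by a factor
`D`, and since a vertex of level `q` receives at most `r` edges from level `q - 1`, level `q` has at
least `D ^ q / r = n` vertices, although it misses the root. So each multigraph has fewer than
`n (D + r)` edges; summing over all `T` counts each edge of the code `r.choose 2` times.
-/

open Finset

section SimpleGraphDistance

variable {V : Type*} {G : SimpleGraph V} {root x y : V}

theorem dist_le_dist_add_one_of_adj (hx : G.Reachable root x) (hxy : G.Adj x y) :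
    G.dist root y ≤ G.dist root x + 1 := by
  simpa only [SimpleGraph.dist_eq_one_iff_adj.mpr hxy] using hx.dist_triangle_left y

theorem exists_adj_dist_eq_dist_add_one (hx : G.Reachable root x) (hne : x ≠ root) :
    ∃ y, G.Adj x y ∧ G.Reachable root y ∧ G.dist root x = G.dist root y + 1 := by
  obtain ⟨walk, hwalk⟩ := hx.symm.exists_walk_length_eq_dist
  cases walk with
  | nil => exact absurd rfl hne
  | @cons _ y _ hxy tail =>
    have hy : G.Reachable root y := tail.reachable.symm
    refine ⟨y, hxy, hy, (dist_le_dist_add_one_of_adj hy hxy.symm).antisymm ?_⟩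
    rw [G.dist_comm, G.dist_comm (u := root), ← hwalk, SimpleGraph.Walk.length_cons]
    exact Nat.succ_le_succ (SimpleGraph.dist_le tail)

end SimpleGraphDistance

section HallCondition

variable {V ι : Type*} [DecidableEq V] {I I' : Finset ι} {e : ι → Finset V} {k k' s : ℕ}

/-- Hall's condition with deficiency `s`, required only of subfamilies of `(e i)_{i ∈ I}` with at
most `k` members. An edge multiset is encoded by a family, a repeated edge having several indices;
for `s = 0` this is the defining property of a combinatorial batch code. -/
def IsHallUpTo (k s : ℕ) (I : Finset ι) (e : ι → Finset V) : Prop :=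
  ∀ J ⊆ I, #J ≤ k → #J ≤ #(J.biUnion e) + s

theorem IsHallUpTo.mono (h : IsHallUpTo k s I e) (hk : k' ≤ k) (hI : I' ⊆ I) :
    IsHallUpTo k' s I' e :=
  fun J hJ hJk => h J (hJ.trans hI) (hJk.trans hk)

theorem IsHallUpTo.sdiff (h : IsHallUpTo k s I e) (T : Finset V) :
    IsHallUpTo k (s + #T) I (fun i => e i \ T) := by
  intro J hJ hJk
  have hcover : J.biUnion e ⊆ J.biUnion (fun i => e i \ T) ∪ T := by
    intro v hv
    obtain ⟨i, hi, hvi⟩ := mem_biUnion.mp hv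
    by_cases hvT : v ∈ T
    · exact mem_union_right _ hvT
    · exact mem_union_left _ (mem_biUnion.mpr ⟨i, hi, mem_sdiff.mpr ⟨hvi, hvT⟩⟩)
  calc #J ≤ #(J.biUnion e) + s := h J hJ hJk
    _ ≤ #(J.biUnion (fun i => e i \ T)) + #T + s := by
      gcongr
      exact (card_le_card hcover).trans (card_union_le _ _)
    _ = #(J.biUnion (fun i => e i \ T)) + (s + #T) := by ring

end HallCondition

section BreadthFirstSearch

variable {V ι : Type*}

/-- The simple graph in which two distinct vertices are adjacent when some `e i` with `i ∈ I`
contains both. -/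
def shadowGraph (I : Finset ι) (e : ι → Finset V) : SimpleGraph V where
  Adj x y := x ≠ y ∧ ∃ i ∈ I, x ∈ e i ∧ y ∈ e i
  symm := ⟨fun _ _ ⟨hne, i, hi, hx, hy⟩ => ⟨hne.symm, i, hi, hy, hx⟩⟩
  loopless := ⟨fun _ h => h.1 rfl⟩

variable [DecidableEq V]

/-- A breadth-first search tree, rooted at `root`, of the component `verts` of `root` in the
multigraph with edges `(e i)_{i ∈ I}`. The values of `parent` and `parentEdge` matter only at
the vertices of `verts` other than `root`, and those of `level` only on `verts`. -/
structure BFSTree (I : Finset ι) (e : ι → Finset V) (root : V) where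
  verts : Finset V
  level : V → ℕ
  parent : V → V
  parentEdge : V → ι
  root_mem : root ∈ verts
  level_root : level root = 0
  parent_mem : ∀ x ∈ verts.erase root, parent x ∈ verts
  level_eq : ∀ x ∈ verts.erase root, level x = level (parent x) + 1
  parentEdge_mem : ∀ x ∈ verts.erase root, parentEdge x ∈ I
  edge_parentEdge : ∀ x ∈ verts.erase root, e (parentEdge x) = {x, parent x}
  mem_of_edge : ∀ i ∈ I, ∀ x ∈ verts, x ∈ e i → e i ⊆ verts
  level_le_of_edge : ∀ i ∈ I, ∀ x ∈ verts, x ∈ e i → ∀ y ∈ e i, level y ≤ level x + 1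

theorem nonempty_bfsTree [Finite V] [Nonempty ι] {I : Finset ι} {e : ι → Finset V}
    (he : ∀ i ∈ I, #(e i) = 2) (root : V) : Nonempty (BFSTree I e root) := by
  classical
  have := Fintype.ofFinite V
  let G := shadowGraph I e
  have exists_parent : ∀ x, G.Reachable root x → x ≠ root → ∃ y i,
      G.Reachable root y ∧ G.dist root x = G.dist root y + 1 ∧ i ∈ I ∧ e i = {x, y} := by
    intro x hx hne
    obtain ⟨y, ⟨hxy, i, hi, hxi, hyi⟩, hy, hdist⟩ := exists_adj_dist_eq_dist_add_one hx hne
    refine ⟨y, i, hy, hdist, hi, (eq_of_subset_of_card_le ?_ ?_).symm⟩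
    · exact insert_subset hxi (singleton_subset_iff.mpr hyi)
    · rw [he i hi, card_pair hxy]
  have : Nonempty V := ⟨root⟩
  choose! parent parentEdge hparent using exists_parent
  have spec : ∀ x ∈ ({x | G.Reachable root x} : Finset V).erase root, _ := fun x hx =>
    hparent x (mem_filter.mp (mem_of_mem_erase hx)).2 (ne_of_mem_erase hx)
  have eq_or_adj : ∀ i ∈ I, ∀ x ∈ e i, ∀ y ∈ e i, x = y ∨ G.Adj x y := fun i hi x hx y hy =>
    or_iff_not_imp_left.mpr fun hxy => ⟨hxy, i, hi, hx, hy⟩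
  refine ⟨{ verts := {x | G.Reachable root x}, level := G.dist root,
            parent := parent, parentEdge := parentEdge,
            root_mem := by simp, level_root := G.dist_self,
            parent_mem := fun x hx => mem_filter.mpr ⟨mem_univ _, (spec x hx).1⟩,
            level_eq := fun x hx => (spec x hx).2.1,
            parentEdge_mem := fun x hx => (spec x hx).2.2.1,
            edge_parentEdge := fun x hx => (spec x hx).2.2.2,
            mem_of_edge := ?_, level_le_of_edge := ?_ }⟩
  all_goals
    intro i hi x hx hxi y hyi
    have hx : G.Reachable root x := (mem_filter.mp hx).2
  · rcases eq_or_adj i hi x hxi y hyi with rfl | hxy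
    · simpa using hx
    · simpa using hx.trans hxy.reachable
  · rcases eq_or_adj i hi x hxi y hyi with rfl | hxy
    · exact Nat.le_succ _
    · exact dist_le_dist_add_one_of_adj hx hxy

namespace BFSTree

variable {I : Finset ι} {e : ι → Finset V} {root : V} (t : BFSTree I e root)

/-- The vertices other than the root on the tree path from `x` to the root. -/
def branch (x : V) : Finset V :=
  (range (t.level x)).image fun j => t.parent^[j] x

/-- The vertices whose parent is `u`. -/
def children (u : V) : Finset V :=
  {x ∈ t.verts.erase root | t.parent x = u}

/-- The vertices of the tree at distance `j` from the root. -/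
def layer (j : ℕ) : Finset V :=
  {x ∈ t.verts | t.level x = j}

/-- The indices of the edges joining a vertex to its parent. -/
def treeEdges : Set ι :=
  t.parentEdge '' (t.verts.erase root : Finset V)

/-- The edges at `u` whose vertices other than `u` have level at most `l`. -/
def edgesToLevel (u : V) (l : ℕ) : Finset ι :=
  {i ∈ I | u ∈ e i ∧ ∀ w ∈ (e i).erase u, t.level w ≤ l}

variable {t} {u x y : V} {i : ι} {j l : ℕ}

theorem level_eq_zero_iff (hx : x ∈ t.verts) : t.level x = 0 ↔ x = root := by
  refine ⟨fun h => ?_, fun h => h ▸ t.level_root⟩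
  by_contra hne
  have := t.level_eq x (mem_erase.mpr ⟨hne, hx⟩)
  omega

theorem mem_layer : x ∈ t.layer j ↔ x ∈ t.verts ∧ t.level x = j :=
  mem_filter

theorem ne_root_of_mem_layer_succ (hx : x ∈ t.layer (j + 1)) : x ≠ root := by
  rintro rfl
  have := (mem_layer.mp hx).2
  have := t.level_root
  omega

theorem level_of_mem_children (hx : x ∈ t.children u) : t.level x = t.level u + 1 := by
  obtain ⟨hx', rfl⟩ := mem_filter.mp hx
  exact t.level_eq x hx'

theorem iterate_parent_mem_and_level (hx : x ∈ t.verts) (hj : j ≤ t.level x) :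
    t.parent^[j] x ∈ t.verts ∧ t.level (t.parent^[j] x) + j = t.level x := by
  induction j with
  | zero => exact ⟨hx, rfl⟩
  | succ j ih =>
    obtain ⟨hmem, hlevel⟩ := ih (by omega)
    have hne : t.parent^[j] x ≠ root := by
      rw [Ne, ← level_eq_zero_iff hmem]
      omega
    have hmem' := mem_erase.mpr ⟨hne, hmem⟩
    rw [Function.iterate_succ_apply']
    have := t.level_eq _ hmem'
    exact ⟨t.parent_mem _ hmem', by omega⟩

theorem branch_subset (hx : x ∈ t.verts) : t.branch x ⊆ t.verts.erase root := by
  intro y hy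
  obtain ⟨j, hj, rfl⟩ := mem_image.mp hy
  have hj := mem_range.mp hj
  obtain ⟨hmem, hlevel⟩ := iterate_parent_mem_and_level hx hj.le
  refine mem_erase.mpr ⟨?_, hmem⟩
  rw [Ne, ← level_eq_zero_iff hmem]
  omega

theorem card_branch_le : #(t.branch x) ≤ t.level x :=
  card_image_le.trans_eq (card_range _)

theorem iterate_parent_mem_insert_branch (hx : x ∈ t.verts) (hj : j ≤ t.level x) :
    t.parent^[j] x ∈ insert root (t.branch x) := by
  rcases hj.lt_or_eq with hj | rfl
  · exact mem_insert_of_mem (mem_image_of_mem _ (mem_range.mpr hj))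
  · obtain ⟨hmem, hlevel⟩ := iterate_parent_mem_and_level hx le_rfl
    rw [(level_eq_zero_iff hmem).mp (by omega)]
    exact mem_insert_self _ _

theorem mem_insert_branch (hx : x ∈ t.verts) : x ∈ insert root (t.branch x) :=
  iterate_parent_mem_insert_branch hx (Nat.zero_le _)

theorem parent_mem_insert_branch (hx : x ∈ t.verts) (hy : y ∈ t.branch x) :
    t.parent y ∈ insert root (t.branch x) := by
  obtain ⟨j, hj, rfl⟩ := mem_image.mp hy
  rw [← Function.iterate_succ_apply' t.parent j x]
  exact iterate_parent_mem_insert_branch hx (mem_range.mp hj)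

theorem parentEdge_injOn : Set.InjOn t.parentEdge (t.verts.erase root) := by
  intro x hx y hy hxy
  by_contra hne
  have hedge : ({x, t.parent x} : Finset V) = {y, t.parent y} := by
    rw [← t.edge_parentEdge x hx, ← t.edge_parentEdge y hy, hxy]
  have hx' : x = t.parent y :=
    (mem_insert.mp (hedge ▸ mem_insert_self x _)).elim (absurd · hne) mem_singleton.mp
  have hy' : y = t.parent x :=
    (mem_insert.mp (hedge ▸ mem_insert_self y _)).elim (absurd ·.symm hne) mem_singleton.mp
  have := t.level_eq x hx
  have := t.level_eq y hy
  rw [← hx'] at this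
  rw [← hy'] at *
  omega

variable {k s : ℕ}

/-- The tree paths from `S` to the root, together with `Q`, form a family that spans at most one
vertex more than it has tree edges. -/
theorem card_le_of_notMem_treeEdges (h : IsHallUpTo k s I e) {S : Finset V} {Q : Finset ι}
    (hS : S ⊆ t.verts) (hQI : Q ⊆ I) (hQ : ∀ i ∈ Q, i ∉ t.treeEdges) (hQS : ∀ i ∈ Q, e i ⊆ S)
    (hk : ∑ x ∈ S, t.level x + #Q ≤ k) : #Q ≤ s + 1 := by
  classical
  let W := S.biUnion t.branch
  have hWverts : W ⊆ t.verts.erase root := biUnion_subset.mpr fun x hx => branch_subset (hS hx)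
  have hWcard : #W ≤ ∑ x ∈ S, t.level x :=
    card_biUnion_le.trans (sum_le_sum fun _ _ => card_branch_le)
  have hmono : ∀ x ∈ S, insert root (t.branch x) ⊆ insert root W := fun x hx =>
    insert_subset_insert _ (subset_biUnion_of_mem _ hx)
  have hcover : (W.image t.parentEdge ∪ Q).biUnion e ⊆ insert root W := by
    refine biUnion_subset.mpr fun i hi => ?_
    rcases mem_union.mp hi with hi | hi
    · obtain ⟨y, hy, rfl⟩ := mem_image.mp hi
      obtain ⟨x, hx, hyx⟩ := mem_biUnion.mp hy
      rw [t.edge_parentEdge y (hWverts hy), insert_subset_iff, singleton_subset_iff]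
      exact ⟨mem_insert_of_mem hy, hmono x hx (parent_mem_insert_branch (hS hx) hyx)⟩
    · exact fun x hx => hmono x (hQS i hi hx) (mem_insert_branch (hS (hQS i hi hx)))
  have hdisj : Disjoint (W.image t.parentEdge) Q := disjoint_left.mpr fun i hiW hiQ => by
    obtain ⟨y, hy, rfl⟩ := mem_image.mp hiW
    exact hQ _ hiQ ⟨y, hWverts hy, rfl⟩
  have hcard : #(W.image t.parentEdge ∪ Q) = #W + #Q := by
    rw [card_union_of_disjoint hdisj,
      card_image_of_injOn (parentEdge_injOn.mono (coe_subset.mpr hWverts))]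
  have hsub : W.image t.parentEdge ∪ Q ⊆ I :=
    union_subset (image_subset_iff.mpr fun y hy => t.parentEdge_mem y (hWverts hy)) hQI
  have hHall := h _ hsub (by omega)
  have := (card_le_card hcover).trans (card_insert_le _ _)
  omega

theorem card_le_of_subset_edgesToLevel (h : IsHallUpTo k s I e) (he : ∀ i ∈ I, #(e i) = 2)
    (hu : u ∈ t.verts) (hk : t.level u + (s + 2) * (l + 1) ≤ k) {P : Finset ι}
    (hPu : P ⊆ t.edgesToLevel u l) (hP : ∀ i ∈ P, i ∉ t.treeEdges) : #P ≤ s + 1 := by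
  by_contra! hlt
  obtain ⟨Q, hQ, hQcard⟩ := exists_subset_card_eq (Nat.succ_le_of_lt hlt)
  have hQmem : ∀ i ∈ Q, i ∈ I ∧ u ∈ e i ∧ ∀ w ∈ (e i).erase u, t.level w ≤ l := fun i hi =>
    mem_filter.mp (hPu (hQ hi))
  set N := Q.biUnion fun i => (e i).erase u with hN
  have hNcard : #N ≤ #Q * 1 := card_biUnion_le_card_mul _ _ _ fun i hi => by
    rw [card_erase_of_mem (hQmem i hi).2.1, he i (hQmem i hi).1]
  have hNlevel : ∑ x ∈ N, t.level x ≤ #N * l := sum_le_card_nsmul _ _ _ fun x hx => by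
    obtain ⟨i, hi, hxi⟩ := mem_biUnion.mp hx
    exact (hQmem i hi).2.2 x hxi
  have huN : u ∉ N := by simp [hN]
  have hverts : insert u N ⊆ t.verts := by
    refine insert_subset hu (biUnion_subset.mpr fun i hi => (erase_subset _ _).trans ?_)
    exact t.mem_of_edge i (hQmem i hi).1 u hu (hQmem i hi).2.1
  have hspan : ∀ i ∈ Q, e i ⊆ insert u N := fun i hi =>
    subset_insert_iff.mpr (subset_biUnion_of_mem (fun i => (e i).erase u) hi)
  have hbudget : ∑ x ∈ insert u N, t.level x + #Q ≤ k := by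
    rw [sum_insert huN]
    nlinarith
  have := card_le_of_notMem_treeEdges h hverts (fun i hi => (hQmem i hi).1)
    (fun i hi => hP i (hQ hi)) hspan hbudget
  omega

theorem eq_parentEdge_or_mem_children (hi : i ∈ t.treeEdges) (hu : u ∈ e i) :
    i = t.parentEdge u ∨ ∃ x ∈ t.children u, t.parentEdge x = i := by
  obtain ⟨x, hx, rfl⟩ := hi
  rw [t.edge_parentEdge x hx, mem_insert, mem_singleton] at hu
  rcases hu with rfl | rfl
  · exact Or.inl rfl
  · exact Or.inr ⟨x, mem_filter.mpr ⟨hx, rfl⟩, rfl⟩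

theorem card_edgesToLevel_le (h : IsHallUpTo k s I e) (he : ∀ i ∈ I, #(e i) = 2)
    (hu : u ∈ t.verts) (hk : t.level u + (s + 2) * (l + 1) ≤ k) :
    #(t.edgesToLevel u l) ≤ #{x ∈ t.children u | t.level x ≤ l} + (s + 2) := by
  classical
  have hcover : t.edgesToLevel u l ⊆ insert (t.parentEdge u)
      ({x ∈ t.children u | t.level x ≤ l}.image t.parentEdge ∪
        {i ∈ t.edgesToLevel u l | i ∉ t.treeEdges}) := by
    intro i hi
    by_cases htree : i ∈ t.treeEdges
    · obtain ⟨-, hui, hlevel⟩ := mem_filter.mp hi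
      rcases eq_parentEdge_or_mem_children htree hui with rfl | ⟨x, hx, rfl⟩
      · exact mem_insert_self _ _
      · have hxu : x ≠ u := by
          rintro rfl
          have := level_of_mem_children hx
          omega
        have hxe : x ∈ e (t.parentEdge x) := by
          rw [t.edge_parentEdge x (mem_filter.mp hx).1]
          exact mem_insert_self _ _
        refine mem_insert_of_mem (mem_union_left _ (mem_image_of_mem _ (mem_filter.mpr ⟨hx, ?_⟩)))
        exact hlevel x (mem_erase.mpr ⟨hxu, hxe⟩)
    · exact mem_insert_of_mem (mem_union_right _ (mem_filter.mpr ⟨hi, htree⟩))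
  have hnontree := card_le_of_subset_edgesToLevel h he hu hk
    (filter_subset (· ∉ t.treeEdges) (t.edgesToLevel u l)) fun i hi => (mem_filter.mp hi).2
  calc #(t.edgesToLevel u l)
      ≤ #({x ∈ t.children u | t.level x ≤ l}.image t.parentEdge ∪
          {i ∈ t.edgesToLevel u l | i ∉ t.treeEdges}) + 1 :=
        (card_le_card hcover).trans (card_insert_le _ _)
    _ ≤ #{x ∈ t.children u | t.level x ≤ l} + (s + 1) + 1 := by
        gcongr
        exact (card_union_le _ _).trans (Nat.add_le_add card_image_le hnontree)

theorem card_edgesToLevel_le_of_le_level (h : IsHallUpTo k s I e) (he : ∀ i ∈ I, #(e i) = 2)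
    (hu : u ∈ t.verts) (hl : l ≤ t.level u) (hk : t.level u + (s + 2) * (l + 1) ≤ k) :
    #(t.edgesToLevel u l) ≤ s + 2 := by
  have hchildren : {x ∈ t.children u | t.level x ≤ l} = ∅ := by
    refine filter_eq_empty_iff.mpr fun x hx => ?_
    have := level_of_mem_children hx
    omega
  simpa [hchildren] using card_edgesToLevel_le h he hu hk

theorem card_incident_le_card_children_add (h : IsHallUpTo k s I e) (he : ∀ i ∈ I, #(e i) = 2)
    (hu : u ∈ t.verts) (hk : t.level u + (s + 2) * (t.level u + 2) ≤ k) :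
    #{i ∈ I | u ∈ e i} ≤ #(t.children u) + (s + 2) := by
  have hall : ({i ∈ I | u ∈ e i} : Finset ι) ⊆ t.edgesToLevel u (t.level u + 1) := by
    intro i hi
    obtain ⟨hi, hui⟩ := mem_filter.mp hi
    exact mem_filter.mpr
      ⟨hi, hui, fun w hw => t.level_le_of_edge i hi u hu hui w (mem_of_mem_erase hw)⟩
  calc #{i ∈ I | u ∈ e i} ≤ #(t.edgesToLevel u (t.level u + 1)) := card_le_card hall
    _ ≤ #{x ∈ t.children u | t.level x ≤ t.level u + 1} + (s + 2) :=
        card_edgesToLevel_le h he hu hk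
    _ ≤ #(t.children u) + (s + 2) := by
        gcongr
        exact filter_subset _ _

variable {q δ : ℕ}

theorem card_layer_mul_le_card_layer_succ (h : IsHallUpTo k s I e) (he : ∀ i ∈ I, #(e i) = 2)
    (hdeg : ∀ u ∈ t.verts, δ + (s + 2) ≤ #{i ∈ I | u ∈ e i}) (hk : j + (s + 2) * (j + 2) ≤ k) :
    #(t.layer j) * δ ≤ #(t.layer (j + 1)) := by
  refine (card_mul_le_card_mul (t := t.layer (j + 1)) (n := 1) (fun u x => t.parent x = u)
    (fun u hu => ?_) (fun x _ => ?_)).trans_eq (mul_one _)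
  · obtain ⟨huv, rfl⟩ := mem_layer.mp hu
    have hsub : t.children u ⊆ bipartiteAbove (fun u x => t.parent x = u)
        (t.layer (t.level u + 1)) u := by
      intro x hx
      obtain ⟨hxv, hxu⟩ := mem_filter.mp hx
      exact mem_filter.mpr
        ⟨mem_layer.mpr ⟨mem_of_mem_erase hxv, level_of_mem_children hx⟩, hxu⟩
    have := card_incident_le_card_children_add h he huv hk
    have := hdeg u huv
    have := card_le_card hsub
    omega
  · exact card_le_one.mpr fun u hu v hv => (mem_filter.mp hu).2.symm.trans (mem_filter.mp hv).2

theorem pow_le_card_layer (h : IsHallUpTo k s I e) (he : ∀ i ∈ I, #(e i) = 2)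
    (hdeg : ∀ u ∈ t.verts, δ + (s + 2) ≤ #{i ∈ I | u ∈ e i}) (hk : (s + 3) * (q + 1) ≤ k) :
    δ ^ q ≤ #(t.layer q) := by
  induction q with
  | zero => exact card_pos.mpr ⟨root, mem_layer.mpr ⟨t.root_mem, t.level_root⟩⟩
  | succ q ih =>
    calc δ ^ (q + 1) = δ ^ q * δ := pow_succ _ _
      _ ≤ #(t.layer q) * δ := Nat.mul_le_mul_right _ (ih (by nlinarith))
      _ ≤ #(t.layer (q + 1)) := card_layer_mul_le_card_layer_succ h he hdeg (by nlinarith)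

variable (t) in
/-- The edges joining level `q` to level `q + 1`. -/
def crossingEdges (q : ℕ) : Finset ι :=
  {i ∈ I | ∃ p ∈ t.layer q ×ˢ t.layer (q + 1), e i = {p.1, p.2}}

theorem mem_edgesToLevel_or_mem_crossingEdges (he : ∀ i ∈ I, #(e i) = 2) (hu : u ∈ t.layer q)
    (hi : i ∈ I) (hui : u ∈ e i) : i ∈ t.edgesToLevel u q ∨ i ∈ t.crossingEdges q := by
  obtain ⟨huv, rfl⟩ := mem_layer.mp hu
  rw [or_iff_not_imp_left]
  intro hlow
  obtain ⟨w, hw, hlevel⟩ : ∃ w ∈ (e i).erase u, t.level u < t.level w := by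
    by_contra! hle
    exact hlow (mem_filter.mpr ⟨hi, hui, hle⟩)
  obtain ⟨hwu, hwi⟩ := mem_erase.mp hw
  have hwlayer : w ∈ t.layer (t.level u + 1) := mem_layer.mpr
    ⟨t.mem_of_edge i hi u huv hui hwi,
      (t.level_le_of_edge i hi u huv hui w hwi).antisymm hlevel⟩
  have hedge : {u, w} = e i := eq_of_subset_of_card_le
    (insert_subset hui (singleton_subset_iff.mpr hwi))
    (by rw [he i hi, card_pair hwu.symm])
  exact mem_filter.mpr ⟨hi, (u, w), mk_mem_product hu hwlayer, hedge.symm⟩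

theorem card_layer_mul_le_card_crossingEdges (h : IsHallUpTo k s I e)
    (he : ∀ i ∈ I, #(e i) = 2) (hdeg : ∀ u ∈ t.verts, δ + (s + 2) ≤ #{i ∈ I | u ∈ e i})
    (hk : (s + 3) * (q + 1) ≤ k) : #(t.layer q) * δ ≤ #(t.crossingEdges q) := by
  classical
  refine (card_mul_le_card_mul (t := t.crossingEdges q) (n := 1) (fun u i => u ∈ e i)
    (fun u hu => ?_) (fun i hi => ?_)).trans_eq (mul_one _)
  · have hsub : ({i ∈ I | u ∈ e i} : Finset ι) ⊆ t.edgesToLevel u q ∪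
        bipartiteAbove (fun u i => u ∈ e i) (t.crossingEdges q) u := by
      intro i hi
      obtain ⟨hi, hui⟩ := mem_filter.mp hi
      exact mem_union.mpr ((mem_edgesToLevel_or_mem_crossingEdges he hu hi hui).imp_right
        fun hcross => mem_filter.mpr ⟨hcross, hui⟩)
    obtain ⟨huv, hlevel⟩ := mem_layer.mp hu
    have := card_edgesToLevel_le_of_le_level h he huv hlevel.ge (by rw [hlevel]; nlinarith)
    have := hdeg u huv
    have := (card_le_card hsub).trans (card_union_le _ _)
    omega
  · obtain ⟨-, ⟨u, w⟩, huw, hedge : e i = {u, w}⟩ := mem_filter.mp hi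
    have hw : w ∈ t.layer (q + 1) := (mem_product.mp huw).2
    have eq_u : ∀ v ∈ bipartiteBelow (fun u i => u ∈ e i) (t.layer q) i, v = u := by
      intro v hv
      obtain ⟨hv, hvi⟩ := mem_filter.mp hv
      rw [hedge, mem_insert, mem_singleton] at hvi
      refine hvi.resolve_right ?_
      rintro rfl
      have := (mem_layer.mp hv).2
      have := (mem_layer.mp hw).2
      omega
    exact card_le_one.mpr fun v hv v' hv' => (eq_u v hv).trans (eq_u v' hv').symm

theorem card_crossingEdges_le (h : IsHallUpTo k s I e) (he : ∀ i ∈ I, #(e i) = 2)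
    (hk : (s + 3) * (q + 1) ≤ k) :
    #(t.crossingEdges q) ≤ #(t.layer (q + 1)) * (s + 2) := by
  classical
  have hsub : t.crossingEdges q ⊆ (t.layer (q + 1)).biUnion fun w => t.edgesToLevel w q := by
    intro i hi
    obtain ⟨hi, ⟨u, w⟩, huw, hedge : e i = {u, w}⟩ := mem_filter.mp hi
    obtain ⟨hu, hw⟩ := mem_product.mp huw
    refine mem_biUnion.mpr ⟨w, hw, mem_filter.mpr ⟨hi, by simp [hedge], fun v hv => ?_⟩⟩
    obtain ⟨hvw, hv⟩ := mem_erase.mp hv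
    rw [hedge, mem_insert, mem_singleton] at hv
    rw [hv.resolve_right hvw]
    exact (mem_layer.mp hu).2.le
  refine (card_le_card hsub).trans (card_biUnion_le_card_mul _ _ _ fun w hw => ?_)
  obtain ⟨hwv, hlevel⟩ := mem_layer.mp hw
  exact card_edgesToLevel_le_of_le_level h he hwv (by omega) (by rw [hlevel]; nlinarith)

theorem pow_succ_lt_card_mul [Fintype V] (t : BFSTree I e root) (h : IsHallUpTo k s I e)
    (he : ∀ i ∈ I, #(e i) = 2) (hdeg : ∀ u ∈ t.verts, δ + (s + 2) ≤ #{i ∈ I | u ∈ e i})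
    (hk : (s + 3) * (q + 1) ≤ k) : δ ^ (q + 1) < Fintype.card V * (s + 2) := by
  have hproper : #(t.layer (q + 1)) < Fintype.card V :=
    card_lt_univ_of_notMem fun hroot => ne_root_of_mem_layer_succ hroot rfl
  calc δ ^ (q + 1) = δ ^ q * δ := pow_succ _ _
    _ ≤ #(t.layer q) * δ := Nat.mul_le_mul_right _ (pow_le_card_layer h he hdeg hk)
    _ ≤ #(t.crossingEdges q) := card_layer_mul_le_card_crossingEdges h he hdeg hk
    _ ≤ #(t.layer (q + 1)) * (s + 2) := card_crossingEdges_le h he hk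
    _ < Fintype.card V * (s + 2) := Nat.mul_lt_mul_of_pos_right hproper (by omega)

end BFSTree

end BreadthFirstSearch

section Counting

variable {V ι : Type*} [Fintype V] [DecidableEq V] {I : Finset ι} {e : ι → Finset V} {k s q : ℕ}

theorem exists_nonempty_forall_le_card_incident [Nonempty V] (he : ∀ i ∈ I, (e i).Nonempty)
    {c : ℝ} (hc : Fintype.card V * c ≤ #I) :
    ∃ U : Finset V, U.Nonempty ∧ ∀ u ∈ U, c ≤ #{i ∈ {i ∈ I | e i ⊆ U} | u ∈ e i} := by
  let excess (U : Finset V) : ℝ := #{i ∈ I | e i ⊆ U} - #U * c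
  obtain ⟨U, hU, hmax⟩ := exists_max_image {U : Finset V | U.Nonempty} excess
    ⟨univ, by simp⟩
  have excess_univ : 0 ≤ excess univ := by simpa [excess] using hc
  have excess_empty : excess ∅ = 0 := by
    simpa [excess] using fun i hi => (he i hi).ne_empty
  have excess_le : ∀ U', excess U' ≤ excess U := by
    intro U'
    rcases U'.eq_empty_or_nonempty with rfl | hU'
    · exact (excess_empty.trans_le excess_univ).trans (hmax univ (by simp))
    · exact hmax U' (by simpa using hU')
  refine ⟨U, by simpa using hU, fun u hu => ?_⟩
  have hsplit : #{i ∈ {i ∈ I | e i ⊆ U} | u ∈ e i} + #{i ∈ I | e i ⊆ U.erase u} =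
      #{i ∈ I | e i ⊆ U} := by
    rw [← card_filter_add_card_filter_not (s := {i ∈ I | e i ⊆ U}) (fun i => u ∈ e i),
      filter_filter (fun i => e i ⊆ U) (fun i => u ∉ e i)]
    simp only [subset_erase]
  have hsplit' : (#{i ∈ {i ∈ I | e i ⊆ U} | u ∈ e i} : ℝ) + #{i ∈ I | e i ⊆ U.erase u} =
      #{i ∈ I | e i ⊆ U} := by exact_mod_cast hsplit
  have herase : (#(U.erase u) : ℝ) + 1 = #U := by exact_mod_cast card_erase_add_one hu
  have := excess_le (U.erase u)
  simp only [excess, ← hsplit', ← herase] at this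
  linarith

theorem card_lt_of_isHallUpTo_of_card_eq_two [Nonempty V] (h : IsHallUpTo k s I e)
    (he : ∀ i ∈ I, #(e i) = 2) (hk : (s + 3) * (q + 1) ≤ k) {D : ℝ} (hD : 0 ≤ D)
    (hDpow : D ^ (q + 1) = Fintype.card V * (s + 2)) :
    (#I : ℝ) < Fintype.card V * (D + (s + 2)) := by
  classical
  by_contra! hle
  obtain ⟨U, ⟨root, hroot⟩, hdeg⟩ := exists_nonempty_forall_le_card_incident
    (fun i hi => card_pos.mp (by rw [he i hi]; exact two_pos)) hle
  set I' : Finset ι := {i ∈ I | e i ⊆ U}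
  have hI' : I' ⊆ I := filter_subset _ _
  have hdeg' : ∀ u ∈ U, ⌈D⌉₊ + (s + 2) ≤ #{i ∈ I' | u ∈ e i} := by
    intro u hu
    rw [← Nat.ceil_add_natCast hD, Nat.ceil_le]
    exact_mod_cast hdeg u hu
  obtain ⟨i₀, -⟩ : ({i ∈ I' | root ∈ e i} : Finset ι).Nonempty :=
    card_pos.mp (by have := hdeg' root hroot; omega)
  have : Nonempty ι := ⟨i₀⟩
  obtain ⟨t⟩ := nonempty_bfsTree (fun i hi => he i (hI' hi)) root
  have hverts : t.verts ⊆ U := by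
    intro x hx
    rcases eq_or_ne x root with rfl | hne
    · exact hroot
    · have hx' := mem_erase.mpr ⟨hne, hx⟩
      apply (mem_filter.mp (t.parentEdge_mem x hx')).2
      rw [t.edge_parentEdge x hx']
      exact mem_insert_self _ _
  have hlt : ⌈D⌉₊ ^ (q + 1) < Fintype.card V * (s + 2) := t.pow_succ_lt_card_mul
    (h.mono le_rfl hI') (fun i hi => he i (hI' hi)) (fun u hu => hdeg' u (hverts hu)) hk
  have hle : D ^ (q + 1) ≤ (⌈D⌉₊ : ℝ) ^ (q + 1) := by gcongr; exact Nat.le_ceil D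
  refine (hDpow ▸ hle).not_gt ?_
  exact_mod_cast hlt

theorem sum_powersetCard_card_filter_subset {r : ℕ} (he : ∀ i ∈ I, #(e i) = r) :
    ∑ T ∈ powersetCard s univ, #{i ∈ I | T ⊆ e i} = #I * r.choose s :=
  calc ∑ T ∈ powersetCard s univ, #{i ∈ I | T ⊆ e i}
      = ∑ i ∈ I, #{T ∈ powersetCard s univ | T ⊆ e i} :=
        sum_card_bipartiteAbove_eq_sum_card_bipartiteBelow _
    _ = ∑ _i ∈ I, r.choose s := sum_congr rfl fun i hi => by
        rw [← he i hi, ← card_powersetCard]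
        congr 1
        ext T
        simp [mem_powersetCard, and_comm]
    _ = #I * r.choose s := by rw [sum_const, smul_eq_mul]

theorem card_mul_choose_lt_of_isHallUpTo [Nonempty V] (h : IsHallUpTo k 0 I e)
    (he : ∀ i ∈ I, #(e i) = s + 2) (hs : s ≤ Fintype.card V) (hk : (s + 3) * (q + 1) ≤ k)
    {D : ℝ} (hD : 0 ≤ D) (hDpow : D ^ (q + 1) = Fintype.card V * (s + 2)) :
    (#I * (s + 2).choose s : ℝ) <
      (Fintype.card V).choose s * (Fintype.card V * (D + (s + 2))) := by
  have hlink : ∀ T ∈ powersetCard s (univ : Finset V),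
      (#{i ∈ I | T ⊆ e i} : ℝ) < Fintype.card V * (D + (s + 2)) := by
    intro T hT
    obtain ⟨-, rfl⟩ := mem_powersetCard.mp hT
    refine card_lt_of_isHallUpTo_of_card_eq_two (e := fun i => e i \ T) (s := #T)
      ?_ (fun i hi => ?_) hk hD hDpow
    · simpa using (h.mono le_rfl (filter_subset _ _)).sdiff T
    · obtain ⟨hi, hTi⟩ := mem_filter.mp hi
      rw [card_sdiff_of_subset hTi, he i hi, Nat.add_sub_cancel_left]
  calc (#I * (s + 2).choose s : ℝ)
      = ∑ T ∈ powersetCard s (univ : Finset V), (#{i ∈ I | T ⊆ e i} : ℝ) := by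
        exact_mod_cast (sum_powersetCard_card_filter_subset he).symm
    _ < ∑ T ∈ powersetCard s (univ : Finset V), (Fintype.card V * (D + (s + 2)) : ℝ) :=
        sum_lt_sum_of_nonempty (powersetCard_nonempty.mpr (by rwa [card_univ])) hlink
    _ = (Fintype.card V).choose s * (Fintype.card V * (D + (s + 2))) := by
        rw [sum_const, card_powersetCard, card_univ, nsmul_eq_mul]

theorem card_lt_of_isHallUpTo [Nonempty V] {r : ℕ} (h : IsHallUpTo k 0 I e) (hr : 2 ≤ r)
    (he : ∀ i ∈ I, #(e i) = r) (hrV : r ≤ Fintype.card V) (hq : 0 < q) (hk : (r + 1) * q ≤ k)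
    {D : ℝ} (hD : 0 ≤ D) (hDpow : D ^ q = Fintype.card V * r) :
    (#I : ℝ) < 2 / r.factorial * (Fintype.card V : ℝ) ^ (r - 1) * (D + r) := by
  obtain ⟨s, rfl⟩ := Nat.exists_eq_add_of_le' hr
  obtain ⟨q, rfl⟩ := Nat.exists_eq_add_one.mpr hq
  push_cast at hDpow ⊢
  set n := Fintype.card V
  have hfactorial : ((s + 2).choose s * s.factorial * 2 : ℝ) = (s + 2).factorial := by
    rw [Nat.choose_symm_add]
    exact_mod_cast Nat.add_choose_mul_factorial_mul_factorial s 2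
  have hpos : (0 : ℝ) < (s + 2).choose s := by exact_mod_cast Nat.choose_pos (by omega)
  refine lt_of_mul_lt_mul_right ?_ hpos.le
  calc (#I * (s + 2).choose s : ℝ)
      < n.choose s * (n * (D + (s + 2))) :=
        card_mul_choose_lt_of_isHallUpTo h he (by omega) hk hD hDpow
    _ ≤ n ^ s / s.factorial * (n * (D + (s + 2))) := by
        gcongr
        exact Nat.choose_le_pow_div s n
    _ = 2 / (s + 2).factorial * (n : ℝ) ^ (s + 1) * (D + (s + 2)) * (s + 2).choose s := by
        rw [← hfactorial]
        field_simp
        ring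

end Counting

section BatchCode

variable {V : Type*} [DecidableEq V]

theorem isHallUpTo_univ_coe {k : ℕ} {E : Multiset (Finset V)}
    (hcode : ∀ E' ≤ E, E'.card ≤ k → E'.card ≤ #(E'.toFinset.biUnion id)) :
    IsHallUpTo k 0 univ fun x : E => x.1 := by
  intro J _ hJk
  have hle : J.val.map (fun x : E => x.1) ≤ E :=
    (Multiset.map_le_map (val_le_iff.mpr (subset_univ J))).trans_eq (Multiset.map_univ_coe E)
  have hunion : (J.val.map fun x : E => x.1).toFinset.biUnion id = J.biUnion fun x => x.1 := by
    ext v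
    simp
  simpa [hunion] using hcode _ hle (by simpa using hJk)

theorem two_div_factorial_mul_eq {r n q : ℕ} (hr : 1 ≤ r) (hn : 0 < n) :
    2 / (r.factorial : ℝ) * (n : ℝ) ^ (r - 1) * ((n * r : ℝ) ^ (1 / q : ℝ) + r) =
      2 * (r : ℝ) ^ (1 / q : ℝ) / r.factorial * (n : ℝ) ^ ((r : ℝ) - 1 + 1 / q) +
        2 / ((r - 1).factorial : ℝ) * (n : ℝ) ^ ((r : ℝ) - 1) := by
  obtain ⟨m, rfl⟩ := Nat.exists_eq_add_of_le' hr
  have hn' : (0 : ℝ) < n := by exact_mod_cast hn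
  have hexp : ((m + 1 : ℕ) : ℝ) - 1 = m := by push_cast; ring
  have hfact : ((m + 1).factorial : ℝ) = (m + 1 : ℕ) * m.factorial := by
    exact_mod_cast m.factorial_succ
  rw [Nat.add_sub_cancel, hexp, Real.rpow_add hn', Real.rpow_natCast,
    Real.mul_rpow hn'.le (Nat.cast_nonneg _), hfact]
  field_simp

theorem statement3_general [Fintype V] [Nonempty V] {k r : ℕ} (hr : 2 ≤ r) (hk : r + 1 ≤ k)
    (E : Multiset (Finset V)) (hunif : ∀ e ∈ E, #e = r)
    (hcode : ∀ E' ≤ E, E'.card ≤ k → E'.card ≤ #(E'.toFinset.biUnion id)) :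
    (E.card : ℝ) <
      2 * (r : ℝ) ^ ((1 : ℝ) / (k / (r + 1) : ℕ)) / r.factorial *
          (Fintype.card V : ℝ) ^ ((r : ℝ) - 1 + 1 / (k / (r + 1) : ℕ)) +
        2 / ((r - 1).factorial : ℝ) * (Fintype.card V : ℝ) ^ ((r : ℝ) - 1) := by
  rcases E.empty_or_exists_mem with rfl | ⟨e, he⟩
  · rw [Multiset.card_zero, Nat.cast_zero]
    positivity
  have hrV : r ≤ Fintype.card V := hunif e he ▸ card_le_univ e
  have hq : 0 < k / (r + 1) := Nat.div_pos hk r.succ_pos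
  rw [← two_div_factorial_mul_eq (by omega) Fintype.card_pos, ← E.card_coe, ← card_univ]
  refine card_lt_of_isHallUpTo (isHallUpTo_univ_coe hcode) hr
    (fun x _ => hunif x.1 Multiset.coe_mem) hrV hq (Nat.mul_div_le k (r + 1)) (by positivity) ?_
  rw [one_div, Real.rpow_inv_natCast_pow (by positivity) hq.ne']

end BatchCode

/-- Upper bound on the maximum size `m(n,r,k)` of an `r`-uniform combinatorial batch
code with parameters `(n,k)`: any multiset `E` of `r`-element subsets of an `n`-element
vertex set in which, for every `1 ≤ i ≤ k`, every sub-multiset of `i` edges (counted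
with multiplicity) covers at least `i` vertices, has fewer than
`(2C''/r!)·n^{r-1+1/⌊k/(r+1)⌋} + (2/(r-1)!)·n^{r-1}` edges, where `C'' = r^{1/⌊k/(r+1)⌋}`. -/
theorem statement3 (n k r : ℕ) (C'' : ℝ)
    (hr : 2 ≤ r) (hk : 2 * r + 2 ≤ k) (hn : k ≤ n)
    (hC : C'' = (r : ℝ) ^ ((1 : ℝ) / ((k / (r + 1) : ℕ) : ℝ)))
    (E : Multiset (Finset (Fin n))) (hunif : ∀ e ∈ E, e.card = r)
    (hcode : ∀ i : ℕ, 1 ≤ i → i ≤ k → ∀ E' ≤ E, Multiset.card E' = i →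
      i ≤ (E'.toFinset.biUnion id).card) :
    (Multiset.card E : ℝ) <
      (2 * C'' / (r.factorial : ℝ)) * (n : ℝ) ^ ((r : ℝ) - 1 + 1 / ((k / (r + 1) : ℕ) : ℝ)) +
        (2 / ((r - 1).factorial : ℝ)) * (n : ℝ) ^ ((r : ℝ) - 1) := by
  subst hC
  have : NeZero n := ⟨by omega⟩
  simpa only [Fintype.card_fin] using statement3_general hr (by omega) E hunif
    fun E' hE' hk' => E'.card.eq_zero_or_pos.elim (fun h0 => h0 ▸ Nat.zero_le _) fun hpos =>
      hcode E'.card hpos hk' E' hE' rfl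
end

section
/- Let r, k, q be fixed integers satisfying r ≥ 2, q ≥ −r+1 and q+r+1 ≤ k, with k ≥ 2. Then f^{(r)}(n,k−q−1,k) = (1+o(1))·ex(n, H^{(r)}(k,q)) as n → ∞; that is, the ratio f^{(r)}(n,k−q−1,k) / ex(n, H^{(r)}(k,q)) tends to 1 as n tends to infinity. -/
/-- `ex(n, H^{(r)}(k,q))`: the maximum number of edges of an `H^{(r)}(k,q)`-free
`r`-uniform hypergraph on `n` vertices. -/
noncomputable def exH (n r k : ℕ) (q : ℤ) : ℕ :=
  sSup {m | ∃ E : Finset (Finset (Fin n)),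
    (∀ e ∈ E, e.card = r) ∧ HFree r k q E ∧ E.card = m}

/-- `f^{(r)}(n,v,k)`: one plus the maximum number of edges of an `r`-uniform hypergraph
on `n` vertices in which every `k` pairwise distinct edges cover at least `v + 1`
vertices. -/
noncomputable def fBES (n r k : ℕ) (v : ℤ) : ℕ :=
  sSup {m | ∃ E : Finset (Finset (Fin n)),
    (∀ e ∈ E, e.card = r) ∧
    (∀ E' ⊆ E, E'.card = k → v + 1 ≤ ((E'.biUnion id).card : ℤ)) ∧ E.card = m} + 1

/-!
The lower bound `ex < f` holds because `H^{(r)}(k,q)`-freeness at `i = k` is the condition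
defining `f`. Conversely, suppose every `k` edges of `E` cover at least `k - q` vertices, and let
`T` be a largest forbidden subfamily of `E` through an edge `e`. Adding to `T` an edge that shares
`r - 1` vertices with `e` costs at most one new vertex, so the result would again be forbidden, or
have `k` edges on too few vertices; hence all such edges already lie in `T`, and there are at most
`k` of them. Consequently at most `k` forbidden edges share any given `(r - 1)`-set, and removing
all of them costs only `O(n^{r-1})` edges. This is negligible because the deletion method, keeping
each `r`-set with probability `L / n` for a large constant `L`, shows that `f / n^{r-1} → ∞`.
-/

section Forbidden

open Finset

variable {V : Type*} [DecidableEq V] {r k : ℕ} {q : ℤ} {E T : Finset (Finset V)} {e : Finset V}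

/-- `T` has the size of a member of the family `H^{(r)}(k,q)`, namely `i` edges on fewer than
`i - q` vertices for some `q + r + 1 ≤ i ≤ k`. -/
def IsForbidden (r k : ℕ) (q : ℤ) (T : Finset (Finset V)) : Prop :=
  q + r + 1 ≤ #T ∧ #T ≤ k ∧ (#(T.biUnion id) : ℤ) < #T - q

/-- Every `k` edges of `E` cover at least `v + 1` vertices: the Brown–Erdős–Sós condition whose
extremal number is `fBES n r k v - 1`. -/
def BESFree (k : ℕ) (v : ℤ) (E : Finset (Finset V)) : Prop :=
  ∀ E' ⊆ E, #E' = k → v + 1 ≤ #(E'.biUnion id)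

theorem hFree_iff_forall_not_isForbidden :
    HFree r k q E ↔ ∀ T ⊆ E, ¬ IsForbidden r k q T := by
  refine ⟨fun h T hTE ⟨hi, hik, hlt⟩ => hlt.not_ge (h #T hi hik T hTE rfl), ?_⟩
  rintro h _ hi hik T hTE rfl
  exact not_lt.1 fun hlt => h T hTE ⟨hi, hik, hlt⟩

theorem HFree.besFree (h : HFree r k q E) (hqk : q + r + 1 ≤ k) : BESFree k (k - q - 1) E :=
  fun E' hE' hcard => by linarith [h k hqk le_rfl E' hE' hcard]

theorem IsForbidden.insert_of_notMem {e' : Finset V} (hT : IsForbidden r k q T) (hTk : #T < k)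
    (he : e ∈ T) (he' : e' ∉ T) (hee' : #(e' \ e) ≤ 1) :
    IsForbidden r k q (insert e' T) := by
  obtain ⟨hi, -, hlt⟩ := hT
  have hspan : #((insert e' T).biUnion id) ≤ #(T.biUnion id) + 1 := by
    have hnew : #(e' \ T.biUnion id) ≤ 1 :=
      (card_le_card (sdiff_subset_sdiff subset_rfl (subset_biUnion_of_mem id he))).trans hee'
    rw [biUnion_insert, id, ← card_sdiff_add_card]
    lia
  rw [IsForbidden, card_insert_of_notMem he']
  lia

theorem BESFree.card_filter_card_sdiff_le_one_le (hE : BESFree k (k - q - 1) E)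
    (hTE : T ⊆ E) (hT : IsForbidden r k q T) (he : e ∈ T) :
    #{e' ∈ E | #(e' \ e) ≤ 1} ≤ k := by
  classical
  obtain ⟨M, hM, hmax⟩ := exists_max_image {T ∈ E.powerset | IsForbidden r k q T ∧ e ∈ T} card
    ⟨T, mem_filter.2 ⟨mem_powerset.2 hTE, hT, he⟩⟩
  obtain ⟨hME, hMforb, heM⟩ := mem_filter.1 hM
  rw [mem_powerset] at hME
  have hMk : #M < k := by
    refine hMforb.2.1.lt_of_ne fun hcard => ?_
    have hcover := hE M hME hcard
    have hlt := hMforb.2.2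
    lia
  have hclosed : {e' ∈ E | #(e' \ e) ≤ 1} ⊆ M := by
    intro e' he'
    obtain ⟨he'E, hee'⟩ := mem_filter.1 he'
    by_contra he'M
    have hle := hmax (insert e' M) <| mem_filter.2 ⟨mem_powerset.2 (insert_subset he'E hME),
      hMforb.insert_of_notMem hMk heM he'M hee', mem_insert_of_mem heM⟩
    rw [card_insert_of_notMem he'M] at hle
    lia
  exact (card_le_card hclosed).trans hMk.le

theorem card_le_mul_choose_of_card_filter_card_sdiff_le_one_le [Fintype V] (hr : 1 ≤ r)
    (hE : ∀ e ∈ E, #e = r) (hk : ∀ e ∈ E, #{e' ∈ E | #(e' \ e) ≤ 1} ≤ k) :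
    #E ≤ k * (Fintype.card V).choose (r - 1) := by
  have hface : ∀ e ∈ E, ∃ g ⊆ e, #g = r - 1 := fun e he =>
    exists_subset_card_eq (by rw [hE e he]; exact r.sub_le 1)
  choose! g hge hgcard using hface
  rw [← card_univ, ← card_powersetCard]
  refine card_le_mul_card_image_of_maps_to
    (fun e he => mem_powersetCard.2 ⟨subset_univ _, hgcard e he⟩) k fun b _ => ?_
  obtain hempty | ⟨e, he⟩ := {e ∈ E | g e = b}.eq_empty_or_nonempty
  · simp [hempty]
  obtain ⟨heE, rfl⟩ := mem_filter.1 he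
  refine (card_le_card fun e' he' => ?_).trans (hk e heE)
  obtain ⟨he'E, hg⟩ := mem_filter.1 he'
  refine mem_filter.2 ⟨he'E, ?_⟩
  calc #(e' \ e) ≤ #(e' \ g e) := card_le_card (sdiff_subset_sdiff subset_rfl (hge e heE))
    _ = r - (r - 1) := by
      rw [← hg, card_sdiff_of_subset (hge e' he'E), hE e' he'E, hgcard e' he'E]
    _ ≤ 1 := by lia

theorem BESFree.exists_hFree_subset [Fintype V] (hr : 1 ≤ r) (hq : 0 < q + r)
    (hE : BESFree k (k - q - 1) E) (hcard : ∀ e ∈ E, #e = r) :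
    ∃ F ⊆ E, HFree r k q F ∧ #E ≤ #F + k * (Fintype.card V).choose (r - 1) := by
  classical
  let D := {e ∈ E | ∃ T ⊆ E, IsForbidden r k q T ∧ e ∈ T}
  have hDE : D ⊆ E := filter_subset _ _
  refine ⟨E \ D, sdiff_subset, hFree_iff_forall_not_isForbidden.2 fun T hT hforb => ?_, ?_⟩
  · obtain ⟨e, he⟩ : T.Nonempty := card_pos.1 (by have := hforb.1; lia)
    obtain ⟨heE, heD⟩ := mem_sdiff.1 (hT he)
    exact heD (mem_filter.2 ⟨heE, T, hT.trans sdiff_subset, hforb, he⟩)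
  · have hD : #D ≤ k * (Fintype.card V).choose (r - 1) := by
      refine card_le_mul_choose_of_card_filter_card_sdiff_le_one_le hr
        (fun e he => hcard e (hDE he)) fun e he => ?_
      obtain ⟨-, T, hTE, hT, heT⟩ := mem_filter.1 he
      exact (card_le_card (filter_subset_filter _ hDE)).trans
        (hE.card_filter_card_sdiff_le_one_le hTE hT heT)
    rw [← card_sdiff_add_card_eq_card hDE]
    gcongr

end Forbidden

section DeletionMethod

open Finset

variable {α R : Type*} [CommSemiring R] {b U : Finset α} {B : Finset (Finset α)}

theorem sum_Icc_pow_mul_pow [DecidableEq α] (hbU : b ⊆ U) (x y : R) :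
    ∑ S ∈ Icc b U, x ^ #S * y ^ (#U - #S) = x ^ #b * (x + y) ^ (#U - #b) := by
  have hdisj : ∀ S ∈ (U \ b).powerset, Disjoint b S := fun S hS =>
    disjoint_sdiff.mono_right (mem_powerset.1 hS)
  have hinj : Set.InjOn (b ∪ ·) ((U \ b).powerset : Set (Finset α)) := fun S hS S' hS' h => by
    simpa only [union_sdiff_cancel_left (hdisj S hS), union_sdiff_cancel_left (hdisj S' hS')]
      using congr_arg (· \ b) h
  rw [Icc_eq_image_powerset hbU, sum_image hinj, ← card_sdiff_of_subset hbU,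
    ← sum_pow_mul_eq_add_pow, mul_sum]
  refine sum_congr rfl fun S hS => ?_
  rw [card_union_of_disjoint (hdisj S hS), card_sdiff_of_subset hbU, pow_add, mul_assoc,
    Nat.sub_sub]

theorem sum_powerset_pow_mul_pow_mul_card_filter_subset [DecidableEq α]
    (hB : ∀ b ∈ B, b ⊆ U) {x y : R} (hxy : x + y = 1) :
    ∑ S ∈ U.powerset, x ^ #S * y ^ (#U - #S) * #{b ∈ B | b ⊆ S} = ∑ b ∈ B, x ^ #b := by
  simp only [card_filter, Nat.cast_sum, Nat.cast_ite, Nat.cast_one, Nat.cast_zero, mul_sum,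
    mul_ite, mul_one, mul_zero]
  rw [sum_comm]
  refine sum_congr rfl fun b hb => ?_
  have hIcc : {S ∈ U.powerset | b ⊆ S} = Icc b U := by
    ext S
    simp [and_comm]
  rw [← sum_filter, hIcc, sum_Icc_pow_mul_pow (hB b hb), hxy, one_pow, mul_one]

theorem sum_powerset_pow_mul_pow_mul_card (U : Finset α) {x y : R} (hxy : x + y = 1) :
    ∑ S ∈ U.powerset, x ^ #S * y ^ (#U - #S) * #S = x * #U := by
  classical
  have hsingletons : ∀ S ∈ U.powerset, #{b ∈ powersetCard 1 U | b ⊆ S} = #S := fun S hS => by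
    have hS1 : {b ∈ powersetCard 1 U | b ⊆ S} = powersetCard 1 S := by
      ext b
      have hSU := mem_powerset.1 hS
      simp only [mem_filter, mem_powersetCard]
      exact ⟨fun h => ⟨h.2, h.1.2⟩, fun h => ⟨⟨h.1.trans hSU, h.2⟩, h.1⟩⟩
    rw [hS1, card_powersetCard, Nat.choose_one_right]
  calc ∑ S ∈ U.powerset, x ^ #S * y ^ (#U - #S) * #S
      = ∑ S ∈ U.powerset, x ^ #S * y ^ (#U - #S) * #{b ∈ powersetCard 1 U | b ⊆ S} :=
        sum_congr rfl fun S hS => by rw [hsingletons S hS]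
    _ = ∑ b ∈ powersetCard 1 U, x ^ #b :=
        sum_powerset_pow_mul_pow_mul_card_filter_subset
          (fun b hb => (mem_powersetCard.1 hb).1) hxy
    _ = x * #U := by
        rw [sum_congr rfl fun b hb => by rw [(mem_powersetCard.1 hb).2, pow_one], sum_const,
          card_powersetCard, Nat.choose_one_right, nsmul_eq_mul, mul_comm]

theorem exists_subset_sub_le_card_sub_card_filter_subset [DecidableEq α]
    (hB : ∀ b ∈ B, b ⊆ U) {p : ℝ} (hp0 : 0 ≤ p) (hp1 : p ≤ 1) :
    ∃ S ⊆ U, p * #U - ∑ b ∈ B, p ^ #b ≤ #S - #{b ∈ B | b ⊆ S} := by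
  -- `w` is the law of the random subset of `U` that contains each point with probability `p`.
  let w : Finset α → ℝ := fun S => p ^ #S * (1 - p) ^ (#U - #S)
  have hsum : ∑ S ∈ U.powerset, w S = 1 := by
    rw [sum_pow_mul_eq_add_pow, add_sub_cancel, one_pow]
  obtain ⟨S, hS, hle⟩ := (convexOn_id convex_univ).exists_ge_of_centerMass
    (t := U.powerset) (w := w) (p := fun S => (#S - #{b ∈ B | b ⊆ S} : ℝ))
    (fun S _ => by have := sub_nonneg.2 hp1; positivity) (by rw [hsum]; exact one_pos)
    (fun S _ => Set.mem_univ _)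
  refine ⟨S, mem_powerset.1 hS, ?_⟩
  simpa only [id, centerMass_eq_of_sum_1 _ _ hsum, smul_eq_mul, mul_sub, sum_sub_distrib, w,
    sum_powerset_pow_mul_pow_mul_card U (add_sub_cancel p 1),
    sum_powerset_pow_mul_pow_mul_card_filter_subset hB (add_sub_cancel p 1)] using hle

theorem exists_subset_forall_not_subset_card_le [DecidableEq α] (hB : ∀ b ∈ B, b.Nonempty)
    (S : Finset α) :
    ∃ I ⊆ S, (∀ b ∈ B, ¬ b ⊆ I) ∧ #S ≤ #I + #{b ∈ B | b ⊆ S} := by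
  obtain rfl | ⟨b₀, hb₀⟩ := B.eq_empty_or_nonempty
  · exact ⟨S, subset_rfl, by simp, by simp⟩
  have : Nonempty α := (hB b₀ hb₀).to_type
  choose! x hx using hB
  let X := image x {b ∈ B | b ⊆ S}
  refine ⟨S \ X, sdiff_subset, fun b hb hbI => ?_, ?_⟩
  · refine (mem_sdiff.1 (hbI (hx b hb))).2 (mem_image_of_mem x ?_)
    exact mem_filter.2 ⟨hb, hbI.trans sdiff_subset⟩
  · calc #S ≤ #(S \ X) + #X := by have := le_card_sdiff X S; lia
      _ ≤ #(S \ X) + #{b ∈ B | b ⊆ S} := by gcongr; exact card_image_le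

theorem exists_subset_forall_not_subset_sub_sum_pow_le_card (hB : ∀ b ∈ B, b.Nonempty ∧ b ⊆ U)
    {p : ℝ} (hp0 : 0 ≤ p) (hp1 : p ≤ 1) :
    ∃ I ⊆ U, (∀ b ∈ B, ¬ b ⊆ I) ∧ p * #U - ∑ b ∈ B, p ^ #b ≤ #I := by
  classical
  obtain ⟨S, hSU, hS⟩ :=
    exists_subset_sub_le_card_sub_card_filter_subset (fun b hb => (hB b hb).2) hp0 hp1
  obtain ⟨I, hIS, hI, hle⟩ := exists_subset_forall_not_subset_card_le (fun b hb => (hB b hb).1) S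
  refine ⟨I, hIS.trans hSU, hI, hS.trans ?_⟩
  rw [sub_le_iff_le_add]
  exact_mod_cast hle

end DeletionMethod

section LowerBound

open Finset

variable {V : Type*} [Fintype V] [DecidableEq V] {w : ℕ}

theorem card_filter_card_biUnion_le (hw : w ≤ Fintype.card V) :
    #{T : Finset (Finset V) | #(T.biUnion id) ≤ w} ≤ (Fintype.card V).choose w * 2 ^ 2 ^ w := by
  have hsub : ({T | #(T.biUnion id) ≤ w} : Finset (Finset (Finset V))) ⊆
      (powersetCard w univ).biUnion fun W => W.powerset.powerset := by
    intro T hT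
    obtain ⟨W, hTW, hW⟩ := exists_superset_card_eq (mem_filter.1 hT).2 hw
    refine mem_biUnion.2 ⟨W, mem_powersetCard.2 ⟨subset_univ _, hW⟩, mem_powerset.2 fun e he => ?_⟩
    exact mem_powerset.2 ((subset_biUnion_of_mem id he).trans hTW)
  refine (card_le_card hsub).trans ?_
  rw [← card_univ, ← card_powersetCard]
  refine card_biUnion_le_card_mul _ _ _ fun W hW => ?_
  rw [card_powerset, card_powerset, (mem_powersetCard.1 hW).2]

theorem exists_besFree_le_card {r k : ℕ} (hk : 1 ≤ k) (hw : w ≤ Fintype.card V) {p : ℝ}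
    (hp0 : 0 ≤ p) (hp1 : p ≤ 1) :
    ∃ E : Finset (Finset V), (∀ e ∈ E, #e = r) ∧ BESFree k w E ∧
      p * (Fintype.card V).choose r - p ^ k * ((Fintype.card V).choose w * 2 ^ 2 ^ w) ≤ #E := by
  let U : Finset (Finset V) := powersetCard r univ
  let B := {T ∈ powersetCard k U | #(T.biUnion id) ≤ w}
  have hBU : ∀ T ∈ B, T ⊆ U ∧ #T = k := fun T hT => mem_powersetCard.1 (mem_filter.1 hT).1
  obtain ⟨E, hEU, hEB, hE⟩ := exists_subset_forall_not_subset_sub_sum_pow_le_card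
    (fun T hT => ⟨card_pos.1 ((hBU T hT).2 ▸ hk), (hBU T hT).1⟩) hp0 hp1
  refine ⟨E, fun e he => (mem_powersetCard.1 (hEU he)).2, fun E' hE' hcard => ?_, le_trans ?_ hE⟩
  · have hspan : w < #(E'.biUnion id) := not_le.1 fun hle =>
      hEB E' (mem_filter.2 ⟨mem_powersetCard.2 ⟨hE'.trans hEU, hcard⟩, hle⟩) hE'
    exact_mod_cast hspan
  · have hB : #B ≤ (Fintype.card V).choose w * 2 ^ 2 ^ w :=
      (card_le_card (filter_subset_filter _ (subset_univ _))).trans (card_filter_card_biUnion_le hw)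
    rw [sum_congr rfl fun T hT => by rw [(hBU T hT).2], sum_const, nsmul_eq_mul,
      mul_comm (#B : ℝ), card_powersetCard, card_univ]
    gcongr
    exact_mod_cast hB

end LowerBound

section ExtremalNumbers

open Finset Filter Topology

variable {n r k : ℕ} {q v : ℤ}

theorem bddAbove_of_forall_exists_card_eq {α : Type*} [Finite α] {s : Set ℕ}
    (hs : ∀ m ∈ s, ∃ E : Finset α, #E = m) : BddAbove s :=
  (Set.finite_range card).bddAbove.mono hs

theorem card_le_exH {E : Finset (Finset (Fin n))} (hcard : ∀ e ∈ E, #e = r)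
    (hE : HFree r k q E) : #E ≤ exH n r k q :=
  le_csSup (bddAbove_of_forall_exists_card_eq fun _ ⟨E, _, _, hE⟩ => ⟨E, hE⟩) ⟨E, hcard, hE, rfl⟩

theorem card_lt_fBES {E : Finset (Finset (Fin n))} (hcard : ∀ e ∈ E, #e = r)
    (hE : BESFree k v E) : #E < fBES n r k v :=
  Nat.lt_succ_of_le <| le_csSup
    (bddAbove_of_forall_exists_card_eq fun _ ⟨E, _, _, hE⟩ => ⟨E, hE⟩) ⟨E, hcard, hE, rfl⟩

theorem exH_lt_fBES (hqk : q + r + 1 ≤ k) : exH n r k q < fBES n r k (k - q - 1) := by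
  refine Nat.lt_succ_of_le (csSup_le' ?_)
  rintro _ ⟨E, hcard, hE, rfl⟩
  exact Nat.le_of_lt_succ (card_lt_fBES hcard (hE.besFree hqk))

theorem fBES_le_exH_add (hr : 1 ≤ r) (hq : 0 < q + r) :
    fBES n r k (k - q - 1) ≤ exH n r k q + k * n.choose (r - 1) + 1 := by
  refine Nat.succ_le_succ (csSup_le' ?_)
  rintro _ ⟨E, hcard, hE, rfl⟩
  obtain ⟨F, hFE, hF, hle⟩ := BESFree.exists_hFree_subset hr hq hE hcard
  rw [Fintype.card_fin] at hle
  exact hle.trans (by gcongr; exact card_le_exH (fun e he => hcard e (hFE he)) hF)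

theorem tendsto_choose_div_pow (k : ℕ) :
    Tendsto (fun n : ℕ => (n.choose k : ℝ) / n ^ k) atTop (𝓝 (k.factorial : ℝ)⁻¹) := by
  have hne : ∀ᶠ n : ℕ in atTop, (n ^ k / k.factorial : ℝ) ≠ 0 := by
    filter_upwards [eventually_gt_atTop 0] with n hn
    positivity
  rw [← one_div]
  refine (((Asymptotics.isEquivalent_iff_tendsto_one hne).1
    (isEquivalent_choose k)).div_const _).congr fun n => ?_
  have hfac : (k.factorial : ℝ) ≠ 0 := by positivity
  rw [Pi.div_apply, div_div, div_mul_cancel₀ _ hfac]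

theorem tendsto_deletion_bound_div_pow (L C : ℝ) (s j : ℕ) :
    Tendsto (fun n : ℕ => (L / n * n.choose (s + 1) -
        (L / n) ^ (j + 1) * (n.choose (j + s) * C)) / (n : ℝ) ^ s)
      atTop (𝓝 (L / (s + 1).factorial)) := by
  have hlim := ((tendsto_choose_div_pow (s + 1)).const_mul L).sub
    (((tendsto_choose_div_pow (j + s)).mul tendsto_inv_atTop_nhds_zero_nat).const_mul
      (L ^ (j + 1) * C))
  rw [mul_zero, mul_zero, sub_zero, ← div_eq_mul_inv] at hlim
  refine hlim.congr' ?_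
  filter_upwards [eventually_gt_atTop 0] with n hn
  rw [div_pow]
  field_simp
  ring

theorem tendsto_fBES_div_pow_atTop (hr : 1 ≤ r) (hk : 1 ≤ k) (hv : v + 2 ≤ k + r) :
    Tendsto (fun n : ℕ => (fBES n r k v : ℝ) / n ^ (r - 1)) atTop atTop := by
  obtain ⟨s, rfl⟩ := Nat.exists_eq_add_of_le' hr
  obtain ⟨j, rfl⟩ := Nat.exists_eq_add_of_le' hk
  refine tendsto_atTop.2 fun A => ?_
  let L : ℝ := (|A| + 1) * (s + 1).factorial
  have hA : A < L / (s + 1).factorial := by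
    rw [mul_div_cancel_right₀ _ (by positivity)]
    linarith [le_abs_self A]
  filter_upwards [(tendsto_deletion_bound_div_pow L (2 ^ 2 ^ (j + s)) s j).eventually_const_le hA,
    eventually_gt_atTop 0, eventually_ge_atTop (j + s), eventually_ge_atTop ⌈L⌉₊]
    with n hAn hn hsj hL
  have hp : L / n ≤ 1 := div_le_one_of_le₀ (Nat.ceil_le.1 hL) n.cast_nonneg
  obtain ⟨E, hcard, hE, hle⟩ := exists_besFree_le_card (V := Fin n) (r := s + 1) (w := j + s) hk
    (by rwa [Fintype.card_fin]) (by positivity) hp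
  rw [Fintype.card_fin] at hle
  have hEv : BESFree (j + 1) v E := fun E' hE' hE'card => by
    have hcover := hE E' hE' hE'card
    lia
  refine hAn.trans ?_
  rw [Nat.add_sub_cancel]
  gcongr
  exact hle.trans (by exact_mod_cast (card_lt_fBES hcard hEv).le)

theorem tendsto_exH_div_fBES (hr : 1 ≤ r) (hq : 0 < q + r) (hqk : q + r + 1 ≤ k) :
    Tendsto (fun n : ℕ => (exH n r k q : ℝ) / fBES n r k (k - q - 1)) atTop (𝓝 1) := by
  have hlow : Tendsto
      (fun n : ℕ => 1 - (k + 1) * ((fBES n r k (k - q - 1) : ℝ) / n ^ (r - 1))⁻¹)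
      atTop (𝓝 1) := by
    have hinv := (tendsto_fBES_div_pow_atTop (k := k) (v := k - q - 1) hr
      (by lia) (by lia)).inv_tendsto_atTop
    simpa only [mul_zero, sub_zero, Pi.inv_apply] using
      (hinv.const_mul (k + 1 : ℝ)).const_sub 1
  refine tendsto_of_tendsto_of_tendsto_of_le_of_le' hlow tendsto_const_nhds ?_ ?_
  · filter_upwards [eventually_gt_atTop 0] with n hn
    have hpos : (0 : ℝ) < fBES n r k (k - q - 1) := by
      exact_mod_cast (exH_lt_fBES hqk).pos
    have hgap : (fBES n r k (k - q - 1) : ℝ) ≤ exH n r k q + (k + 1) * n ^ (r - 1) := by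
      have hchoose : fBES n r k (k - q - 1) ≤ exH n r k q + (k + 1) * n ^ (r - 1) := by
        calc fBES n r k (k - q - 1) ≤ exH n r k q + k * n.choose (r - 1) + 1 :=
              fBES_le_exH_add hr hq
          _ ≤ exH n r k q + k * n ^ (r - 1) + n ^ (r - 1) := by
              gcongr
              · exact Nat.choose_le_pow n (r - 1)
              · exact Nat.one_le_pow _ _ hn
          _ = exH n r k q + (k + 1) * n ^ (r - 1) := by ring
      exact_mod_cast hchoose
    rw [inv_div, mul_div_assoc', one_sub_div hpos.ne']
    gcongr
    linarith
  · refine Eventually.of_forall fun n => div_le_one_of_le₀ ?_ (Nat.cast_nonneg _)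
    exact_mod_cast (exH_lt_fBES hqk).le

end ExtremalNumbers

/-- For fixed `r ≥ 2`, `q ≥ -r+1`, `q+r+1 ≤ k` and `k ≥ 2`, the ratio
`f^{(r)}(n,k-q-1,k) / ex(n, H^{(r)}(k,q))` tends to `1` as `n → ∞`. -/
theorem statement6 (r k : ℕ) (q : ℤ)
    (hr : 2 ≤ r) (hq : -(r : ℤ) + 1 ≤ q) (hqk : q + r + 1 ≤ (k : ℤ)) (hk2 : 2 ≤ k) :
    Filter.Tendsto
      (fun n : ℕ => (fBES n r k ((k : ℤ) - q - 1) : ℝ) / (exH n r k q : ℝ))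
      Filter.atTop (nhds 1) := by
  have hinv := (tendsto_exH_div_fBES (one_le_two.trans hr) (by lia) hqk).inv₀ one_ne_zero
  simpa only [inv_div, inv_one] using hinv
end
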